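/- arXiv:math/0401242 — 3 statements merged into one kernel-verified Lean document; each statement's English description precedes it below -/
import Mathlib

section
/- Let A = C(X) ⊗ K ≅ C(X, K) where X is a compact Hausdorff space of covering dimension d, and let e, f be projections in M_n(C(X)) such that rank(e(x)) ≥ rank(f(x)) + d + 1 for every x ∈ X. Then f is Murray–von Neumann subequivalent to e in M_n(C(X)): there exists v with v*v = f and vv* ≤ e. -/
open scoped ENNReal MultiplierAlgebra Matrix

/-- An element `b` of a topological ring is *full* if the closure of the two-sided ideal
it generates is the whole ring. -/
def IsFullIn {A : Type*} [NonUnitalNonAssocRing A] [TopologicalSpace A] (b : A) : Prop :=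
  closure ((TwoSidedIdeal.span {b} : TwoSidedIdeal A) : Set A) = Set.univ

/-- Property (P1): every full element `b` admits `x, y` with `x * b * y = 1`. -/
def PropP1 (B : Type*) [Ring B] [TopologicalSpace B] : Prop :=
  ∀ b : B, IsFullIn b → ∃ x y : B, x * b * y = 1

/-- The piecewise-linear function `f_n` : `0` on `[0, 1/(n+1)]`, `1` on `[1/n, ∞)`,
linear in between. -/
noncomputable def fcut (n : ℕ) (t : ℝ) : ℝ := min 1 (max 0 ((n * (n + 1) : ℝ) * t - n))
/-- Covering dimension at most `d`: every open cover admits an open refinement (indexed by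
the same set) of order at most `d + 1`. -/
def CoveringDimLE (X : Type*) [TopologicalSpace X] (d : ℕ) : Prop :=
  ∀ (ι : Type) (U : ι → Set X), (∀ i, IsOpen (U i)) → (⋃ i, U i) = Set.univ →
    ∃ V : ι → Set X, (∀ i, IsOpen (V i)) ∧ (∀ i, V i ⊆ U i) ∧ (⋃ i, V i) = Set.univ ∧
      ∀ x : X, {i | x ∈ V i}.Finite ∧ {i | x ∈ V i}.ncard ≤ d + 1

open Module in
/-- Given finitely many matrices, almost every matrix `B` is such that each affine combination
`B + ∑ j ∈ S, c j • A j` with at most `d` terms is injective. -/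
theorem dense_injective_add_combination {r m d : ℕ} (h : m + d + 1 ≤ r) {ι : Type*} [Finite ι]
    (A : ι → Fin r → Fin m → ℂ) :
    Dense {B : Fin r → Fin m → ℂ | ∀ S : Finset ι, S.card ≤ d → ∀ c : ι → ℂ,
      ∀ w : Fin m → ℂ, Matrix.of (B + ∑ j ∈ S, c j • A j) *ᵥ w = 0 → w = 0} := by
  classical
  rcases Nat.eq_zero_or_pos m with rfl | hm
  · exact dense_univ.mono fun B _ S _ c w _ ↦ Subsingleton.elim _ _
  let Φ (S : Finset ι) (k : Fin m) :
      (S → ℂ) × ({j // j ≠ k} → ℂ) × (Fin r → {j // j ≠ k} → ℂ) → Fin r → Fin m → ℂ :=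
    fun p i j ↦ (if hj : j = k then ∑ l, p.2.1 l * p.2.2 i l else p.2.2 i ⟨j, hj⟩)
      - ∑ s : S, p.1 s * A s i j
  have hΦ (S : Finset ι) (k : Fin m) : ContDiff ℝ 1 (Φ S k) := by
    refine contDiff_pi.2 fun i ↦ contDiff_pi.2 fun j ↦ ContDiff.sub ?_ (by fun_prop)
    by_cases hj : j = k
    · simp only [hj, dite_true]; fun_prop
    · simp only [hj, dite_false]; fun_prop
  let bad : Set (Fin r → Fin m → ℂ) :=
    ⋃ q ∈ {q : Finset ι × Fin m | q.1.card ≤ d}, Set.range (Φ q.1 q.2)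
  have hbad : dimH bad < finrank ℝ (Fin r → Fin m → ℂ) := by
    have hle : dimH bad ≤ ((2 * d + 2 * (m - 1) + 2 * (r * (m - 1)) : ℕ) : ENNReal) := by
      rw [dimH_bUnion (Set.to_countable _)]
      refine iSup₂_le fun q hq ↦ (hΦ q.1 q.2).dimH_range_le.trans ?_
      refine Nat.cast_le.2 ?_
      have : q.1.card ≤ d := hq
      simp only [ne_eq, finrank_prod, finrank_pi_fintype, Complex.finrank_real_complex,
        Finset.sum_const, Finset.card_univ, Fintype.card_coe, smul_eq_mul,
        Fintype.card_subtype_compl, Fintype.card_fin, Fintype.card_unique]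
      nlinarith
    refine hle.trans_lt (Nat.cast_lt.2 ?_)
    simp only [finrank_pi_fintype, Complex.finrank_real_complex, Finset.sum_const,
      Finset.card_univ, Fintype.card_fin, smul_eq_mul]
    obtain ⟨m, rfl⟩ : ∃ k, m = k + 1 := ⟨m - 1, by omega⟩
    simp only [add_tsub_cancel_right]
    nlinarith
  refine (dense_compl_of_dimH_lt_finrank hbad).mono fun B hB S hS c w hw ↦ ?_
  by_contra hne
  obtain ⟨k, hk⟩ := Function.ne_iff.1 hne
  refine hB (Set.mem_biUnion (x := (S, k)) hS ⟨(fun s ↦ c s, fun l ↦ - w l / w k,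
    fun i l ↦ (B + ∑ j ∈ S, c j • A j) i l), ?_⟩)
  ext i j
  have hS : ∑ s : S, c s * A s i j = ∑ s ∈ S, c s * A s i j :=
    Finset.sum_coe_sort S fun s ↦ c s * A s i j
  by_cases hj : j = k
  · subst hj
    have h1 := congrFun hw i
    simp only [Matrix.mulVec, dotProduct, Matrix.of_apply, Pi.zero_apply] at h1
    rw [← Finset.add_sum_erase _ _ (Finset.mem_univ j)] at h1
    have h2 : ∑ l : {l // l ≠ j}, - w l / w j * (B + ∑ s ∈ S, c s • A s) i l
        = ∑ l ∈ Finset.univ.erase j, - w l / w j * (B + ∑ s ∈ S, c s • A s) i l :=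
      (Finset.sum_subtype (Finset.univ.erase j) (by simp)
        (fun l ↦ - w l / w j * (B + ∑ s ∈ S, c s • A s) i l)).symm
    have h3 : ∑ l ∈ Finset.univ.erase j, - w l / w j * (B + ∑ s ∈ S, c s • A s) i l
        = (B + ∑ s ∈ S, c s • A s) i j := by
      have hk' : w j ≠ 0 := hk
      rw [← mul_right_inj' hk', Finset.mul_sum]
      rw [show ∑ l ∈ Finset.univ.erase j, w j * (- w l / w j * (B + ∑ s ∈ S, c s • A s) i l)
        = - ∑ l ∈ Finset.univ.erase j, (B + ∑ s ∈ S, c s • A s) i l * w l from by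
          rw [← Finset.sum_neg_distrib]
          exact Finset.sum_congr rfl fun l _ ↦ by field_simp]
      linear_combination -h1
    simp only [Φ, dite_true, h2, h3, hS]
    simp
  · simp only [Φ, hj, dite_false, hS]
    simp

/-- Matrices in prescribed nonempty open sets can be chosen so that every nontrivial linear
combination of at most `d + 1` of them is injective. -/
theorem exists_injective_combinations {r m d : ℕ} (h : m + d + 1 ≤ r) {ι : Type*} [Fintype ι]
    [DecidableEq ι] (O : ι → Set (Fin r → Fin m → ℂ)) (hO : ∀ i, IsOpen (O i))
    (hne : ∀ i, (O i).Nonempty) :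
    ∃ A : ι → Fin r → Fin m → ℂ, (∀ i, A i ∈ O i) ∧ ∀ c : ι → ℂ, c ≠ 0 →
      (Finset.univ.filter fun i ↦ c i ≠ 0).card ≤ d + 1 →
      ∀ w : Fin m → ℂ, Matrix.of (∑ j, c j • A j) *ᵥ w = 0 → w = 0 := by
  suffices H : ∀ s : Finset ι, ∃ A : ι → Fin r → Fin m → ℂ, (∀ i, A i ∈ O i) ∧
      ∀ c : ι → ℂ, c ≠ 0 → (∀ i ∉ s, c i = 0) →
      (Finset.univ.filter fun i ↦ c i ≠ 0).card ≤ d + 1 →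
      ∀ w : Fin m → ℂ, Matrix.of (∑ j, c j • A j) *ᵥ w = 0 → w = 0 by
    obtain ⟨A, hA, hA'⟩ := H Finset.univ
    exact ⟨A, hA, fun c hc ↦ hA' c hc (by simp)⟩
  intro s
  induction s using Finset.induction_on with
  | empty =>
    choose A hA using hne
    exact ⟨A, hA, fun c hc h0 ↦ (hc (funext fun i ↦ h0 i (by simp))).elim⟩
  | insert i s hi ih =>
    obtain ⟨A, hA, hA'⟩ := ih
    obtain ⟨B, hBO, hB⟩ := (dense_injective_add_combination h A).inter_open_nonempty _ (hO i) (hne i)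
    refine ⟨Function.update A i B, fun j ↦ ?_, fun c hc h0 hcard w hw ↦ ?_⟩
    · by_cases hj : j = i
      · subst hj; simpa using hBO
      · simpa [hj] using hA j
    have hsum : ∑ j, c j • Function.update A i B j
        = c i • B + ∑ j ∈ Finset.univ.erase i, c j • A j := by
      rw [← Finset.add_sum_erase _ _ (Finset.mem_univ i), Function.update_self]
      congr 1
      exact Finset.sum_congr rfl fun j hj ↦ by rw [Function.update_of_ne (Finset.ne_of_mem_erase hj)]
    rw [hsum] at hw
    by_cases hci : c i = 0
    · refine hA' c hc (fun j hj ↦ ?_) hcard w ?_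
      · by_cases hji : j = i
        · rwa [hji]
        · exact h0 j (by simp [hji, hj])
      · rw [← Finset.add_sum_erase _ _ (Finset.mem_univ i)]
        simpa [hci] using hw
    · set S := (Finset.univ.filter fun i ↦ c i ≠ 0).erase i with hS
      refine hB S ?_ (fun j ↦ c j / c i) w ?_
      · rw [hS, Finset.card_erase_of_mem (by simp [hci])]
        omega
      · have h1 : ∑ j ∈ Finset.univ.erase i, c j • A j = ∑ j ∈ S, c j • A j := by
          refine (Finset.sum_subset (Finset.erase_subset_erase _ (Finset.filter_subset _ _)) ?_).symm
          intro j hj hj'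
          have : c j = 0 := by
            by_contra hne'
            exact hj' (Finset.mem_erase.2 ⟨Finset.ne_of_mem_erase hj, by simpa using hne'⟩)
          simp [this]
        have h2 : c i • B + ∑ j ∈ S, c j • A j = c i • (B + ∑ j ∈ S, (c j / c i) • A j) := by
          rw [smul_add, Finset.smul_sum]
          congr 1
          exact Finset.sum_congr rfl fun j _ ↦ by rw [smul_smul, mul_div_cancel₀ _ hci]
        rw [h1, h2, ← Matrix.smul_of, Matrix.smul_mulVec] at hw
        exact (smul_eq_zero.1 hw).resolve_left hci

/-- On a compact space of covering dimension at most `d`, a continuous family of `r × m` matrices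
with `m + d < r` can be approximated uniformly by families of injective matrices. -/
theorem exists_injective_approx {X : Type} [TopologicalSpace X] [CompactSpace X] [T2Space X]
    {r m d : ℕ} (hdim : CoveringDimLE X d) (h : m + d + 1 ≤ r) (g : X → Fin r → Fin m → ℂ)
    (hg : Continuous g) {ε : ℝ} (hε : 0 < ε) :
    ∃ g' : X → Fin r → Fin m → ℂ, Continuous g' ∧ (∀ x, ‖g' x - g x‖ < ε) ∧
      ∀ x w, Matrix.of (g' x) *ᵥ w = 0 → w = 0 := by
  classical
  let U (y : X) : Set X := g ⁻¹' Metric.ball (g y) (ε / 2)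
  have hU (y : X) : IsOpen (U y) := Metric.isOpen_ball.preimage hg
  obtain ⟨t, ht⟩ := isCompact_univ.elim_finite_subcover U hU
    fun x _ ↦ Set.mem_iUnion.2 ⟨x, by simp [U, hε]⟩
  obtain ⟨V, hVo, hVU, hVc, hV⟩ := hdim t (fun y ↦ U y) (fun y ↦ hU y) (by
    refine Set.eq_univ_of_univ_subset (ht.trans ?_)
    intro x hx
    simpa using hx)
  obtain ⟨ρ, hρ⟩ := PartitionOfUnity.exists_isSubordinate isClosed_univ V hVo hVc.ge
  obtain ⟨A, hA, hinj⟩ := exists_injective_combinations h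
    (fun y : t ↦ Metric.ball (g y) (ε / 2)) (fun _ ↦ Metric.isOpen_ball)
    (fun y ↦ ⟨g y, by simp [hε]⟩)
  have hsum (x : X) : ∑ y, ρ y x = 1 := by
    rw [← finsum_eq_sum_of_fintype]
    exact ρ.sum_eq_one (Set.mem_univ x)
  have hsupp {x : X} {y : t} (hy : ρ y x ≠ 0) : x ∈ V y := hρ y (subset_tsupport _ hy)
  refine ⟨fun x ↦ ∑ y, (ρ y x : ℂ) • A y, ?_, fun x ↦ ?_, fun x ↦ hinj _ ?_ ?_⟩
  · refine continuous_finsetSum _ fun y _ ↦ ?_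
    exact (Complex.continuous_ofReal.comp (ρ y).continuous).smul continuous_const
  · have h1 : ∑ y, (ρ y x : ℂ) • A y ∈ Metric.ball (g x) ε := by
      have := (convex_ball (g x) ε).sum_mem (t := Finset.univ.filter fun y ↦ ρ y x ≠ 0)
        (w := fun y ↦ ρ y x) (z := A) (fun y _ ↦ ρ.nonneg y x)
        (by rw [Finset.sum_filter_ne_zero]; exact hsum x) (fun y hy ↦ ?_)
      · rw [Finset.sum_filter_of_ne] at this
        · simpa using this
        · intro y _ hy hy0
          simp [hy0] at hy
      · have h2 := hA y
        have h3 : dist (g x) (g y) < ε / 2 := hVU y (hsupp (Finset.mem_filter.1 hy).2)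
        rw [Metric.mem_ball] at h2 ⊢
        rw [dist_comm] at h3
        linarith [dist_triangle (A y) (g y) (g x)]
    rwa [Metric.mem_ball, dist_eq_norm] at h1
  · intro h0
    have := hsum x
    rw [Finset.sum_eq_zero fun y _ ↦ by simpa using congrFun h0 y] at this
    exact zero_ne_one this
  · refine le_trans ?_ (hV x).2
    rw [← Set.ncard_coe_finset]
    refine Set.ncard_le_ncard (fun y hy ↦ hsupp ?_) (hV x).1
    simpa using hy

/-- An idempotent matrix of rank `r` factors as `P * P'` with `P' * P = 1` of size `r`. -/
theorem exists_rank_factorization {n : ℕ} (p : Matrix (Fin n) (Fin n) ℂ) (hp : p * p = p) :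
    ∃ (P : Matrix (Fin n) (Fin p.rank) ℂ) (P' : Matrix (Fin p.rank) (Fin n) ℂ),
      P' * P = 1 ∧ P * P' = p := by
  let R := LinearMap.range p.mulVecLin
  let b : Module.Basis (Fin p.rank) ℂ R := Module.finBasisOfFinrankEq ℂ R rfl
  let i : (Fin p.rank → ℂ) →ₗ[ℂ] (Fin n → ℂ) := R.subtype ∘ₗ b.equivFun.symm.toLinearMap
  let q : (Fin n → ℂ) →ₗ[ℂ] (Fin p.rank → ℂ) := b.equivFun.toLinearMap ∘ₗ p.mulVecLin.rangeRestrict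
  refine ⟨LinearMap.toMatrix' i, LinearMap.toMatrix' q, ?_, ?_⟩
  · rw [← LinearMap.toMatrix'_comp, ← LinearMap.toMatrix'_id]
    congr 1
    refine LinearMap.ext fun v ↦ ?_
    obtain ⟨u, hu⟩ : ∃ u, p *ᵥ u = (b.equivFun.symm v : R) := (b.equivFun.symm v).2
    have : p.mulVecLin.rangeRestrict (b.equivFun.symm v : R) = b.equivFun.symm v := by
      refine Subtype.ext ?_
      change p *ᵥ (b.equivFun.symm v : R) = _
      rw [← hu, Matrix.mulVec_mulVec, hp]
    change b.equivFun (p.mulVecLin.rangeRestrict (b.equivFun.symm v : R)) = v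
    rw [this, LinearEquiv.apply_symm_apply]
  · rw [← LinearMap.toMatrix'_comp]
    have : i ∘ₗ q = p.mulVecLin := by
      refine LinearMap.ext fun v ↦ ?_
      change ((b.equivFun.symm (b.equivFun (p.mulVecLin.rangeRestrict v)) : R) : Fin n → ℂ) = _
      rw [LinearEquiv.symm_apply_apply]
      rfl
    rw [this]
    exact LinearMap.toMatrix'_toLin' p

/-- The matrix `B`, viewed as a map from the range of `f` to the range of `e`, is injective. -/
def CompressionInjective {n : ℕ} (e f B : Matrix (Fin n) (Fin n) ℂ) : Prop :=
  ∀ u, f *ᵥ u = u → e *ᵥ (B *ᵥ u) = 0 → u = 0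

/-- The Gram matrix of the compression `e * B * f`, extended by the identity on the kernel
of the projection `f`. -/
noncomputable def compressionGram {n : ℕ} (e f B : Matrix (Fin n) (Fin n) ℂ) :
    Matrix (Fin n) (Fin n) ℂ :=
  (e * B * f)ᴴ * (e * B * f) + (1 - f)ᴴ * (1 - f)

open scoped ComplexOrder in
theorem compressionGram_posSemidef {n : ℕ} (e f B : Matrix (Fin n) (Fin n) ℂ) :
    (compressionGram e f B).PosSemidef :=
  (Matrix.posSemidef_conjTranspose_mul_self _).add (Matrix.posSemidef_conjTranspose_mul_self _)

open scoped ComplexOrder in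
theorem det_compressionGram_ne_zero_iff {n : ℕ} {e f B : Matrix (Fin n) (Fin n) ℂ} :
    (compressionGram e f B).det ≠ 0 ↔ CompressionInjective e f B := by
  constructor
  · intro h u hu hu'
    refine Matrix.eq_zero_of_mulVec_eq_zero h ?_
    have h1 : (e * B * f) *ᵥ u = 0 := by
      rw [← Matrix.mulVec_mulVec, hu, ← Matrix.mulVec_mulVec, hu']
    have h2 : (1 - f) *ᵥ u = 0 := by
      rw [Matrix.sub_mulVec, Matrix.one_mulVec, hu, sub_self]
    rw [compressionGram, Matrix.add_mulVec, ← Matrix.mulVec_mulVec _ _ (e * B * f), h1,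
      ← Matrix.mulVec_mulVec, h2]
    simp
  · intro h hdet
    obtain ⟨u, hu0, hu⟩ := Matrix.exists_mulVec_eq_zero_iff.2 hdet
    have key (W : Matrix (Fin n) (Fin n) ℂ) :
        star u ⬝ᵥ (Wᴴ * W) *ᵥ u = star (W *ᵥ u) ⬝ᵥ (W *ᵥ u) := by
      rw [← Matrix.mulVec_mulVec, Matrix.dotProduct_mulVec, Matrix.star_mulVec]
    have h0 : star u ⬝ᵥ compressionGram e f B *ᵥ u = 0 := by rw [hu]; simp
    rw [compressionGram, Matrix.add_mulVec, dotProduct_add, key, key] at h0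
    obtain ⟨h1, h2⟩ := (add_eq_zero_iff_of_nonneg (dotProduct_star_self_nonneg _)
      (dotProduct_star_self_nonneg _)).1 h0
    rw [dotProduct_star_self_eq_zero] at h1 h2
    have hfu : f *ᵥ u = u := by
      rw [Matrix.sub_mulVec, Matrix.one_mulVec, sub_eq_zero] at h2
      exact h2.symm
    refine hu0 (h u hfu ?_)
    rwa [← Matrix.mulVec_mulVec, hfu, ← Matrix.mulVec_mulVec] at h1

theorem Continuous.compressionGram {Y : Type*} [TopologicalSpace Y] {n : ℕ}
    {e f B : Y → Matrix (Fin n) (Fin n) ℂ} (he : Continuous e) (hf : Continuous f)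
    (hB : Continuous B) : Continuous fun y ↦ compressionGram (e y) (f y) (B y) := by
  unfold _root_.compressionGram
  have h1 := (he.matrix_mul hB).matrix_mul hf
  have h2 := (continuous_const (y := (1 : Matrix (Fin n) (Fin n) ℂ))).sub hf
  exact (h1.matrix_conjTranspose.matrix_mul h1).add (h2.matrix_conjTranspose.matrix_mul h2)

/-- Injectivity of the compressions over a compact set is stable under small changes of an
auxiliary parameter. -/
theorem exists_pos_compressionInjective {X V : Type*} [TopologicalSpace X]
    [SeminormedAddCommGroup V] {n : ℕ} {e f : X → Matrix (Fin n) (Fin n) ℂ}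
    {E : X × V → Matrix (Fin n) (Fin n) ℂ} (he : Continuous e) (hf : Continuous f)
    (hE : Continuous E) {C : Set X} (hC : IsCompact C)
    (h : ∀ x ∈ C, CompressionInjective (e x) (f x) (E (x, 0))) :
    ∃ ε : ℝ, 0 < ε ∧ ∀ x ∈ C, ∀ D, ‖D‖ < ε → CompressionInjective (e x) (f x) (E (x, D)) := by
  let O : Set (X × V) := {p | (compressionGram (e p.1) (f p.1) (E p)).det ≠ 0}
  have hO : IsOpen O := isOpen_ne_fun (Continuous.compressionGram (he.comp continuous_fst)
    (hf.comp continuous_fst) hE).matrix_det continuous_const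
  have hCO : C ×ˢ {(0 : V)} ⊆ O := by
    rintro ⟨x, D⟩ ⟨hx, hD⟩
    obtain rfl : D = 0 := hD
    have := (det_compressionGram_ne_zero_iff (e := e x) (f := f x) (B := E (x, 0))).2 (h x hx)
    exact this
  obtain ⟨u, v, -, hvo, hCu, hv, huv⟩ := generalized_tube_lemma hC isCompact_singleton hO hCO
  obtain ⟨ε, hε, hball⟩ := Metric.isOpen_iff.1 hvo 0 (hv (Set.mem_singleton 0))
  refine ⟨ε, hε, fun x hx D hD ↦ ?_⟩
  have hD' : D ∈ v := hball (mem_ball_zero_iff.2 hD)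
  have hmem : (x, D) ∈ O := huv (Set.mk_mem_prod (hCu hx) hD')
  exact det_compressionGram_ne_zero_iff.1 hmem

/-- Near each point, a family that is injective on a closed set can be perturbed so as to become
injective on a neighbourhood of the point as well. -/
theorem exists_nhds_extend_compressionInjective {X : Type} [TopologicalSpace X] [CompactSpace X]
    [T2Space X] {d n : ℕ} (hdim : CoveringDimLE X d) (e f : C(X, Matrix (Fin n) (Fin n) ℂ))
    (he : ∀ x, e x * e x = e x) (hf : ∀ x, f x * f x = f x)
    (hrank : ∀ x, (f x).rank + d + 1 ≤ (e x).rank) (x₀ : X) :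
    ∃ K ∈ nhds x₀, IsClosed K ∧ ∀ C, IsClosed C → ∀ g : C(X, Matrix (Fin n) (Fin n) ℂ),
      (∀ x ∈ C, CompressionInjective (e x) (f x) (g x)) →
      ∃ g' : C(X, Matrix (Fin n) (Fin n) ℂ),
        ∀ x ∈ C ∪ K, CompressionInjective (e x) (f x) (g' x) := by
  obtain ⟨P, P', hP, hPe⟩ := exists_rank_factorization (e x₀) (he x₀)
  obtain ⟨Q, Q', hQ, hQf⟩ := exists_rank_factorization (f x₀) (hf x₀)
  let M (x : X) := P' * e x * P
  let N (x : X) := Q' * f x * Q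
  let Y (x : X) := f x * f x₀ + (1 - f x) * (1 - f x₀)
  have hM : Continuous M :=
    (continuous_const.matrix_mul e.continuous).matrix_mul continuous_const
  have hN : Continuous N :=
    (continuous_const.matrix_mul f.continuous).matrix_mul continuous_const
  have hY : Continuous Y := (f.continuous.matrix_mul continuous_const).add
    ((continuous_const.sub f.continuous).matrix_mul continuous_const)
  let a (x : X) : ℂ := (M x).det * (N x).det
  have ha : Continuous a := hM.matrix_det.mul hN.matrix_det
  have ha₀ : a x₀ = 1 := by
    have h1 : M x₀ = 1 := by
      simp only [M, ← hPe]
      rw [← Matrix.mul_assoc P', hP, Matrix.one_mul, hP]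
    have h2 : N x₀ = 1 := by
      simp only [N, ← hQf]
      rw [← Matrix.mul_assoc Q', hQ, Matrix.one_mul, hQ]
    simp [a, h1, h2]
  have hY₀ : (Y x₀).det = 1 := by
    have : Y x₀ = 1 := by
      simp only [Y, hf, mul_sub, sub_mul, one_mul, mul_one]
      abel
    rw [this, Matrix.det_one]
  let K : Set X := {x | 1 / 2 ≤ ‖a x‖ ∧ 1 / 2 ≤ ‖(Y x).det‖}
  refine ⟨K, ?_, (isClosed_le continuous_const ha.norm).inter
    (isClosed_le continuous_const hY.matrix_det.norm), fun C hC g hg ↦ ?_⟩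
  · have h1 := ha.norm.continuousAt.eventually (lt_mem_nhds
      (show (1 / 2 : ℝ) < ‖a x₀‖ by rw [ha₀]; norm_num))
    have h2 := hY.matrix_det.norm.continuousAt.eventually (lt_mem_nhds
      (show (1 / 2 : ℝ) < ‖(Y x₀).det‖ by rw [hY₀]; norm_num))
    filter_upwards [h1, h2] with x hx hx'
    exact ⟨hx.le, hx'.le⟩
  let k (x : X) : ℂ := star (a x) * ((max (‖a x‖ ^ 2) (1 / 4))⁻¹ : ℝ)
  have hk : Continuous k := by
    refine ha.star.mul (Complex.continuous_ofReal.comp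
      (((ha.norm.pow 2).max continuous_const).inv₀ fun x ↦ ?_))
    have : (1 / 4 : ℝ) ≤ max (‖a x‖ ^ 2) (1 / 4) := le_max_right _ _
    exact (lt_of_lt_of_le (by norm_num) this).ne'
  have hka {x : X} (hx : x ∈ K) : k x * a x = 1 := by
    have h1 : 1 / 2 ≤ ‖a x‖ := hx.1
    have h2 : max (‖a x‖ ^ 2) (1 / 4) = ‖a x‖ ^ 2 := max_eq_left (by nlinarith)
    have h3 : star (a x) * a x = ((‖a x‖ ^ 2 : ℝ) : ℂ) := by
      push_cast
      exact Complex.conj_mul' _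
    have h4 : ((‖a x‖ ^ 2 : ℝ) : ℂ) ≠ 0 := by
      rw [Complex.ofReal_ne_zero]
      positivity
    simp only [k, h2]
    rw [mul_right_comm, h3, Complex.ofReal_inv, mul_inv_cancel₀ h4]
  let E (p : X × (Fin (e x₀).rank → Fin (f x₀).rank → ℂ)) : Matrix (Fin n) (Fin n) ℂ :=
    g p.1 + k p.1 • (P * (M p.1).adjugate * Matrix.of p.2 * (N p.1).adjugate * Q')
  have hE : Continuous E := by
    refine (g.continuous.comp continuous_fst).add ((hk.comp continuous_fst).smul ?_)
    exact (((continuous_const.matrix_mul (hM.comp continuous_fst).matrix_adjugate).matrix_mul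
      continuous_snd).matrix_mul (hN.comp continuous_fst).matrix_adjugate).matrix_mul
        continuous_const
  obtain ⟨ε, hε, hstable⟩ := exists_pos_compressionInjective e.continuous f.continuous hE
    hC.isCompact (fun x hx ↦ by
      have : E (x, 0) = g x := by simp [E]
      rw [this]
      exact hg x hx)
  let h (x : X) : Fin (e x₀).rank → Fin (f x₀).rank → ℂ := P' * e x * g x * f x * Q
  have hh : Continuous h :=
    (((continuous_const.matrix_mul e.continuous).matrix_mul g.continuous).matrix_mul
      f.continuous).matrix_mul continuous_const
  obtain ⟨h', hh', hclose, hinj⟩ := exists_injective_approx hdim (hrank x₀)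
    h hh hε
  let D (x : X) : Fin (e x₀).rank → Fin (f x₀).rank → ℂ := h' x - h x
  have hD : Continuous D := hh'.sub hh
  refine ⟨⟨fun x ↦ E (x, D x), hE.comp (continuous_id.prodMk hD)⟩, ?_⟩
  rintro x (hx | hx)
  · exact hstable x hx (D x) (hclose x)
  · intro u hu hu'
    have hdY : (Y x).det ≠ 0 := by
      intro h0
      have := hx.2
      rw [h0] at this
      norm_num at this
    obtain ⟨t, rfl⟩ : ∃ t, Y x *ᵥ t = u :=
      ⟨(Y x)⁻¹ *ᵥ u, by
        rw [Matrix.mulVec_mulVec, Matrix.mul_nonsing_inv _ (isUnit_iff_ne_zero.2 hdY),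
          Matrix.one_mulVec]⟩
    have hut : Y x *ᵥ t = (f x * Q) *ᵥ (Q' *ᵥ t) := by
      rw [Matrix.mulVec_mulVec, Matrix.mul_assoc, hQf]
      conv_lhs => rw [← hu]
      rw [Matrix.mulVec_mulVec]
      congr 1
      simp only [Y, mul_add, mul_sub, sub_mul, ← mul_assoc, hf, one_mul, mul_one]
      abel
    have hmain : P' * e x * E (x, D x) * (f x * Q) = Matrix.of (h' x) := by
      have h1 : P' * e x * (P * (M x).adjugate * Matrix.of (D x) * (N x).adjugate * Q')
          * (f x * Q) = a x • Matrix.of (D x) := by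
        have : P' * e x * (P * (M x).adjugate * Matrix.of (D x) * (N x).adjugate * Q')
          * (f x * Q) = (M x * (M x).adjugate) * Matrix.of (D x) * ((N x).adjugate * N x) := by
          simp only [M, N, Matrix.mul_assoc]
        rw [this, Matrix.mul_adjugate, Matrix.adjugate_mul]
        simp [a, smul_smul, mul_comm]
      simp only [E]
      rw [Matrix.mul_add, Matrix.mul_smul, Matrix.add_mul, Matrix.smul_mul, h1, smul_smul, hka hx, one_smul]
      ext i j
      simp only [D, h, Matrix.mul_assoc]
      exact add_sub_cancel _ _
    have hw : Q' *ᵥ t = 0 := by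
      refine hinj x _ ?_
      rw [← hmain, ← Matrix.mulVec_mulVec, ← hut, ← Matrix.mulVec_mulVec, ← Matrix.mulVec_mulVec]
      change P' *ᵥ (e x *ᵥ (E (x, D x) *ᵥ _)) = 0
      rw [show e x *ᵥ (E (x, D x) *ᵥ (Y x *ᵥ t)) = 0 from hu', Matrix.mulVec_zero]
    rw [hut, hw, Matrix.mulVec_zero]

theorem exists_compressionInjective {X : Type} [TopologicalSpace X] [CompactSpace X]
    [T2Space X] {d n : ℕ} (hdim : CoveringDimLE X d) (e f : C(X, Matrix (Fin n) (Fin n) ℂ))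
    (he : ∀ x, e x * e x = e x) (hf : ∀ x, f x * f x = f x)
    (hrank : ∀ x, (f x).rank + d + 1 ≤ (e x).rank) :
    ∃ g : C(X, Matrix (Fin n) (Fin n) ℂ), ∀ x, CompressionInjective (e x) (f x) (g x) := by
  let p (S : Set X) : Prop := ∃ K, S ⊆ K ∧ IsClosed K ∧ ∀ C, IsClosed C →
    ∀ g : C(X, Matrix (Fin n) (Fin n) ℂ),
      (∀ x ∈ C, CompressionInjective (e x) (f x) (g x)) →
      ∃ g' : C(X, Matrix (Fin n) (Fin n) ℂ),
        ∀ x ∈ C ∪ K, CompressionInjective (e x) (f x) (g' x)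
  have hp : p Set.univ := by
    refine isCompact_univ.induction_on (p := p) ?_ ?_ ?_ ?_
    · exact ⟨∅, subset_rfl, isClosed_empty, fun C _ g hg ↦ ⟨g, by simpa using hg⟩⟩
    · rintro s t hst ⟨K, hK, h⟩
      exact ⟨K, hst.trans hK, h⟩
    · rintro s t ⟨K, hsK, hK, h⟩ ⟨L, htL, hL, h'⟩
      refine ⟨K ∪ L, Set.union_subset_union hsK htL, hK.union hL, fun C hC g hg ↦ ?_⟩
      obtain ⟨g₁, hg₁⟩ := h C hC g hg
      obtain ⟨g₂, hg₂⟩ := h' (C ∪ K) (hC.union hK) g₁ hg₁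
      exact ⟨g₂, by rwa [← Set.union_assoc]⟩
    · intro x _
      obtain ⟨K, hKx, hK, h⟩ := exists_nhds_extend_compressionInjective hdim e f he hf hrank x
      exact ⟨K, mem_nhdsWithin_of_mem_nhds hKx, K, subset_rfl, hK, h⟩
  obtain ⟨K, hK, -, h⟩ := hp
  obtain ⟨g, hg⟩ := h ∅ isClosed_empty 0 (by simp)
  exact ⟨g, fun x ↦ hg x (Or.inr (hK (Set.mem_univ x)))⟩

open scoped ComplexOrder Matrix.Norms.L2Operator MatrixOrder in
/-- A continuous family of positive definite matrices has a continuous square root. -/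
theorem exists_continuous_sqrt {X : Type*} [TopologicalSpace X] {n : ℕ}
    {T : X → Matrix (Fin n) (Fin n) ℂ} (hT : Continuous T) (hpos : ∀ x, (T x).PosSemidef) :
    ∃ R : X → Matrix (Fin n) (Fin n) ℂ, Continuous R ∧ (∀ x, R x * R x = T x) ∧
      (∀ x, (R x)ᴴ = R x) ∧ ∀ x Z, Commute (T x) Z → Commute (R x) Z := by
  have hpos' (x : X) : 0 ≤ T x := Matrix.nonneg_iff_posSemidef.2 (hpos x)
  refine ⟨fun x ↦ CFC.sqrt (T x), ?_, fun x ↦ CFC.sqrt_mul_sqrt_self _ (hpos' x), fun x ↦ ?_,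
    fun x Z hZ ↦ ?_⟩
  · exact CFC.continuousOn_sqrt.comp_continuous hT hpos'
  · exact (CFC.sqrt_nonneg (T x)).isSelfAdjoint
  · exact hZ.cfcₙ_nnreal _

/-- if `X` is compact Hausdorff of covering dimension `d` and `e, f` are
projections in `M_n(C(X))` with `rank e(x) ≥ rank f(x) + d + 1` everywhere, then `f ≲ e`:
there is `v` with `v* v = f` and `v v* ≤ e`. -/
theorem stmt14 {X : Type} [TopologicalSpace X] [CompactSpace X] [T2Space X]
    (d n : ℕ) (hdim : CoveringDimLE X d)
    (e f : C(X, Matrix (Fin n) (Fin n) ℂ))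
    (he : ∀ x, e x * e x = e x ∧ (e x)ᴴ = e x)
    (hf : ∀ x, f x * f x = f x ∧ (f x)ᴴ = f x)
    (hrank : ∀ x, (f x).rank + d + 1 ≤ (e x).rank) :
    ∃ v : C(X, Matrix (Fin n) (Fin n) ℂ),
      (∀ x, (v x)ᴴ * v x = f x) ∧
      (∀ x, e x * (v x * (v x)ᴴ) = v x * (v x)ᴴ) := by
  obtain ⟨g, hg⟩ := exists_compressionInjective hdim e f (fun x ↦ (he x).1) (fun x ↦ (hf x).1) hrank
  let T (x : X) := compressionGram (e x) (f x) (g x)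
  obtain ⟨R, hRc, hRR, hRs, hRcomm⟩ := exists_continuous_sqrt (T := T)
    (Continuous.compressionGram e.continuous f.continuous g.continuous)
    fun x ↦ compressionGram_posSemidef _ _ _
  have hR (x : X) : IsUnit (R x).det := by
    have h1 : (T x).det ≠ 0 := det_compressionGram_ne_zero_iff.2 (hg x)
    rw [← hRR, Matrix.det_mul] at h1
    exact isUnit_iff_ne_zero.2 (left_ne_zero_of_mul h1)
  have hRinv : Continuous fun x ↦ (R x)⁻¹ := by
    simp only [Matrix.inv_def, Ring.inverse_eq_inv']
    exact (hRc.matrix_det.inv₀ fun x ↦ (hR x).ne_zero).smul hRc.matrix_adjugate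
  let W (x : X) := e x * g x * f x
  have hW : Continuous W := (e.continuous.matrix_mul g.continuous).matrix_mul f.continuous
  refine ⟨⟨fun x ↦ W x * (R x)⁻¹, hW.matrix_mul hRinv⟩, fun x ↦ ?_, fun x ↦ ?_⟩
  · have hff := (hf x).1
    have hfs := (hf x).2
    have hZ : (1 - f x)ᴴ * (1 - f x) = 1 - f x := by
      rw [Matrix.conjTranspose_sub, hfs, Matrix.conjTranspose_one]
      simp only [mul_sub, sub_mul, one_mul, mul_one, hff]
      abel
    have hTW : T x = (W x)ᴴ * W x + (1 - f x) := by
      simp only [T, W, compressionGram, hZ]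
    have hW1 : W x * (1 - f x) = 0 := by
      simp only [W, mul_sub, mul_one, mul_assoc, hff, sub_self]
    have hW2 : (1 - f x) * (W x)ᴴ = 0 := by
      have := congrArg Matrix.conjTranspose hW1
      rwa [Matrix.conjTranspose_mul, Matrix.conjTranspose_sub, hfs, Matrix.conjTranspose_one,
        Matrix.conjTranspose_zero] at this
    have hZZ : (1 - f x) * (1 - f x) = 1 - f x := by
      simp only [mul_sub, sub_mul, one_mul, mul_one, hff]
      abel
    have hTZ : T x * (1 - f x) = 1 - f x := by
      rw [hTW, add_mul, mul_assoc, hW1, mul_zero, zero_add, hZZ]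
    have hZT : (1 - f x) * T x = 1 - f x := by
      rw [hTW, mul_add, ← mul_assoc, hW2, zero_mul, zero_add, hZZ]
    have hcomm : R x * (1 - f x) = (1 - f x) * R x := hRcomm x _ (hTZ.trans hZT.symm)
    have hRZR : R x * (1 - f x) * R x = 1 - f x := by
      rw [mul_assoc, ← hcomm, ← mul_assoc, hRR, hTZ]
    have hinv₁ := Matrix.nonsing_inv_mul _ (hR x)
    have hinv₂ := Matrix.mul_nonsing_inv _ (hR x)
    have hWW : (W x)ᴴ * W x = R x * f x * R x := by
      have h1 : (W x)ᴴ * W x = R x * R x - (1 - f x) := by rw [hRR, hTW, add_sub_cancel_right]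
      rw [h1, ← hRZR]
      simp only [mul_sub, sub_mul, mul_one]
      abel
    change (W x * (R x)⁻¹)ᴴ * (W x * (R x)⁻¹) = f x
    calc (W x * (R x)⁻¹)ᴴ * (W x * (R x)⁻¹) = (R x)⁻¹ * ((W x)ᴴ * W x) * (R x)⁻¹ := by
          rw [Matrix.conjTranspose_mul, Matrix.conjTranspose_nonsing_inv, hRs]
          simp only [mul_assoc]
      _ = ((R x)⁻¹ * R x) * f x * (R x * (R x)⁻¹) := by rw [hWW]; simp only [mul_assoc]
      _ = f x := by rw [hinv₁, hinv₂, one_mul, mul_one]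
  · change e x * (W x * (R x)⁻¹ * (W x * (R x)⁻¹)ᴴ) = W x * (R x)⁻¹ * (W x * (R x)⁻¹)ᴴ
    have : e x * W x = W x := by simp only [W, ← mul_assoc, (he x).1]
    rw [← mul_assoc, ← mul_assoc, this]
end

section
/- Let B = A ⊗ K where A is a unital purely infinite simple C*-algebra. Then both the multiplier algebra M(B) and the corona algebra M(B)/B have property (P1): every full element b admits x, y with x b y = 1. -/
open scoped ENNReal MultiplierAlgebra

lemma IsFullIn.map_eq_zero {A A' : Type*} [Ring A] [TopologicalSpace A] [Ring A']
    [TopologicalSpace A'] [T1Space A'] (f : A →+* A') (hf : Continuous f) {b : A}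
    (hb : IsFullIn b) (hfb : f b = 0) (a : A) : f a = 0 := by
  have hspan : TwoSidedIdeal.span {b} ≤ TwoSidedIdeal.ker f :=
    TwoSidedIdeal.span_le.2 (by simpa [TwoSidedIdeal.mem_ker] using hfb)
  have hclosed : IsClosed (f ⁻¹' {0}) := isClosed_singleton.preimage hf
  have hsub : ((TwoSidedIdeal.span {b} : TwoSidedIdeal A) : Set A) ⊆ f ⁻¹' {0} := fun x hx ↦
    (TwoSidedIdeal.mem_ker f).1 (hspan hx)
  have ha : a ∈ closure ((TwoSidedIdeal.span {b} : TwoSidedIdeal A) : Set A) := by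
    rw [show closure _ = _ from hb]; trivial
  exact closure_minimal hsub hclosed ha

section CStar

variable {M : Type*} [CStarAlgebra M] [PartialOrder M] [StarOrderedRing M]

lemma exists_conjugate_eq_of_le_smul {u a p : M} (hp : star p = p) (hpp : p * p = p)
    (ha : 0 ≤ a) (hup : u * p = u) {κ : ℝ} (hκ : 0 < κ)
    (hu : κ • p ≤ star u * a * u) {d : ℝ} (hdu : d • (star u * u) ≤ star u * a * u) :
    ∃ s : M, star (u * s) * a * (u * s) = p ∧ d • (star (u * s) * (u * s)) ≤ p ∧
      u * s * p = u * s := by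
  have hpu : p * star u = star u := by
    rw [← hp, ← star_mul, hup]
  set h := star u * a * u with h_def
  have h0 : 0 ≤ h := star_left_conjugate_nonneg ha u
  have hph : p * h = h := by rw [h_def, ← mul_assoc, ← mul_assoc, hpu]
  have hhp : h * p = h := by rw [h_def, mul_assoc, hup]
  have hq : 0 ≤ 1 - p := by
    have := star_mul_self_nonneg (1 - p)
    have e : star (1 - p) * (1 - p) = 1 - p := by
      simp [mul_sub, sub_mul, hp, hpp]
    rwa [e] at this
  have hp0 : 0 ≤ p := by
    have := star_mul_self_nonneg p
    rwa [hp, hpp] at this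
  set g := h + (1 - p) with g_def
  have hle : (min κ 1) • (1 : M) ≤ g := by
    calc (min κ 1) • (1 : M) = (min κ 1) • p + (min κ 1) • (1 - p) := by
          rw [← smul_add]; simp
      _ ≤ κ • p + (1 : ℝ) • (1 - p) := by
          gcongr
          · exact min_le_left _ _
          · exact min_le_right _ _
      _ ≤ g := by
          rw [one_smul, g_def]; gcongr
  have hg : IsStrictlyPositive g := by
    refine IsStrictlyPositive.of_le ?_ hle
    exact IsStrictlyPositive.smul (lt_min hκ one_pos) (by cfc_tac)
  have hgp : Commute g p := by
    change g * p = p * g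
    rw [g_def, add_mul, mul_add, hph, hhp, sub_mul, mul_sub]; simp
  set r := g ^ (-(1 / 2) : ℝ) with r_def
  have hr : star r = r := (IsSelfAdjoint.of_nonneg CFC.rpow_nonneg).star_eq
  have hrp : r * p = p * r := by
    rw [r_def, CFC.rpow_def]
    exact hgp.cfc_nnreal _
  have hrg : r * g * r = 1 := CFC.conjugate_rpow_neg_one_half g hg
  have hgh : p * g * p = h := by
    rw [g_def, mul_add, add_mul, hph, hhp, mul_sub, sub_mul]; simp [hpp]
  have key : star (r * p) * h * (r * p) = p := by
    calc star (r * p) * h * (r * p) = p * r * (p * g * p) * (r * p) := by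
          rw [star_mul, hr, hp, hgh]
      _ = p * (r * p) * g * (p * r) * p := by noncomm_ring
      _ = p * (p * r) * g * (r * p) * p := by rw [hrp]
      _ = (p * p) * (r * g * r) * (p * p) := by noncomm_ring
      _ = p := by rw [hrg, hpp, mul_one, hpp]
  have e1 : ∀ x : M, star (u * (r * p)) * x * (u * (r * p)) =
      star (r * p) * (star u * x * u) * (r * p) := fun x ↦ by
    rw [star_mul]; noncomm_ring
  refine ⟨r * p, ?_, ?_, ?_⟩
  · rw [e1, key]
  · have := star_left_conjugate_le_conjugate hdu (r * p)
    rw [key] at this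
    refine le_of_eq_of_le ?_ this
    rw [star_mul]
    simp only [mul_smul_comm, smul_mul_assoc, mul_assoc]
  · simp only [mul_assoc, hpp]

lemma exists_conjugate_eq_of_lt_norm {a p : M} (ha : 0 ≤ a) {d : ℝ} (hd : 0 < d)
    (hda : d < ‖a‖) (hp : star p = p) (hpp : p * p = p)
    (hfull : ∀ u : M, a * u ≠ 0 → ∃ X Y : M, X * (a * u) * Y = p) :
    ∃ w : M, star (a * w) * a * (a * w) = p ∧ d • (star (a * w) * (a * w)) ≤ p ∧
      a * w * p = a * w := by
  have hsa : IsSelfAdjoint a := .of_nonneg ha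
  have hnt : Nontrivial M := ⟨a, 0, fun h ↦ by simp [h] at hda; linarith⟩
  set v := cfc (fun t : ℝ ↦ max 0 (t - d)) a with v_def
  have hav : a * v = cfc (fun t : ℝ ↦ t * max 0 (t - d)) a := by
    rw [cfc_mul (fun t : ℝ ↦ t) (fun t : ℝ ↦ max 0 (t - d)) a, cfc_id' ℝ a]
  set c := a * v with c_def
  have hc : star c = c := by
    rw [hav]; exact (cfc_predicate (R := ℝ) _ a).star_eq
  have hc0 : c ≠ 0 := by
    intro h
    have h1 : ‖a‖ * max 0 (‖a‖ - d) ∈ spectrum ℝ c := by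
      rw [hav, cfc_map_spectrum (R := ℝ) _ a]
      exact ⟨‖a‖, CStarAlgebra.norm_mem_spectrum_of_nonneg ha, rfl⟩
    rw [h, spectrum.zero_eq, Set.mem_singleton_iff, max_eq_right (by linarith)] at h1
    have : 0 < ‖a‖ * (‖a‖ - d) := mul_pos (by linarith) (by linarith)
    linarith
  have hcac : d • (star c * c) ≤ star c * a * c := by
    rw [hc, hav, ← cfc_id' ℝ a, cfc_id' ℝ a]
    nth_rw 4 [← cfc_id' ℝ a]
    rw [← cfc_mul .., ← cfc_mul .., ← cfc_mul .., ← cfc_smul ..]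
    refine cfc_mono fun t ht ↦ ?_
    have ht0 : 0 ≤ t := spectrum_nonneg_of_nonneg ha ht
    simp only [smul_eq_mul]
    rcases le_total t d with h | h
    · simp [max_eq_left (sub_nonpos.2 h)]
    · nlinarith [mul_nonneg (sub_nonneg.2 h) (sq_nonneg (t * max 0 (t - d)))]
  obtain ⟨X, Y, hXY⟩ := hfull v hc0
  set u := c * (Y * p) with u_def
  have hup : u * p = u := by simp only [u_def, mul_assoc, hpp]
  have hXu : X * u = p := by rw [u_def, ← mul_assoc, ← mul_assoc, hXY, hpp]
  have hdu : d • (star u * u) ≤ star u * a * u := by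
    have := star_left_conjugate_le_conjugate hcac (Y * p)
    refine le_of_eq_of_le ?_ (this.trans_eq ?_)
    · rw [u_def, star_mul]; simp only [mul_smul_comm, smul_mul_assoc, mul_assoc]
    · rw [u_def, star_mul c]; simp only [mul_assoc]
  have hpu : p ≤ (‖X‖ ^ 2) • (star u * u) := by
    have := star_left_conjugate_le_conjugate
      (CStarAlgebra.star_mul_le_algebraMap_norm_sq (a := X)) u
    refine le_of_eq_of_le ?_ (this.trans_eq ?_)
    · calc p = star p * p := by rw [hp, hpp]
        _ = star (X * u) * (X * u) := by rw [hXu]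
        _ = _ := by rw [star_mul]; simp only [mul_assoc]
    · rw [Algebra.algebraMap_eq_smul_one]
      simp
  set K := ‖X‖ ^ 2 + 1 with K_def
  have hK : 0 < K := by positivity
  have hκ : (d / K) • p ≤ star u * a * u := by
    refine le_trans ?_ hdu
    calc (d / K) • p ≤ (d / K) • (K • (star u * u)) := by
          refine smul_le_smul_of_nonneg_left (hpu.trans ?_) (by positivity)
          exact smul_le_smul_of_nonneg_right (by linarith) (star_mul_self_nonneg u)
      _ = d • (star u * u) := by rw [smul_smul, div_mul_cancel₀ _ hK.ne']
  obtain ⟨s, h1, h2, h3⟩ :=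
    exists_conjugate_eq_of_le_smul hp hpp ha hup (div_pos hd hK) hκ hdu
  have e : u * s = a * (v * (Y * p) * s) := by
    simp only [u_def, c_def, mul_assoc]
  rw [e] at h1 h2 h3
  exact ⟨_, h1, h2, h3⟩


lemma le_one_of_star_eq_of_mul_self_eq {p : M} (hp : star p = p) (hpp : p * p = p) : p ≤ 1 := by
  have h := star_mul_self_nonneg (1 - p)
  have e : star (1 - p) * (1 - p) = 1 - p := by simp [mul_sub, sub_mul, hp, hpp]
  rw [e] at h
  exact sub_nonneg.1 h

lemma norm_le_of_smul_star_mul_self_le_one {y : M} {d : ℝ} (hd : 0 < d)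
    (h : d • (star y * y) ≤ 1) : ‖y‖ ≤ √(1 / d) := by
  apply Real.le_sqrt_of_sq_le
  have h1 : star y * y ≤ algebraMap ℝ M (1 / d) := by
    have := smul_le_smul_of_nonneg_left h (one_div_pos.2 hd).le
    rw [smul_smul, one_div_mul_cancel hd.ne', one_smul] at this
    rwa [Algebra.algebraMap_eq_smul_one]
  have h2 := (CStarAlgebra.norm_le_iff_le_algebraMap (star y * y) (one_div_pos.2 hd).le
    (star_mul_self_nonneg y)).2 h1
  rwa [CStarRing.norm_star_mul_self, ← pow_two] at h2

end CStar

/-- Sums of diagonal matrix units. -/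
def diagSum {M : Type*} [AddCommMonoid M] (E : ℕ → ℕ → M) (n : ℕ) : M :=
  ∑ i ∈ Finset.range n, E i i

section MatrixUnits

variable {M : Type*} [CStarAlgebra M] {E : ℕ → ℕ → M}

lemma diagSum_succ (n : ℕ) : diagSum E (n + 1) = diagSum E n + E n n :=
  Finset.sum_range_succ _ _

lemma star_diagSum (hstar : ∀ i j, star (E i j) = E j i) (n : ℕ) :
    star (diagSum E n) = diagSum E n := by
  simp [diagSum, star_sum, hstar]

lemma diagSum_mul_unit (hmul : ∀ i j k l, E i j * E k l = if j = k then E i l else 0)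
    (n k l : ℕ) : diagSum E n * E k l = if k < n then E k l else 0 := by
  simp [diagSum, Finset.sum_mul, hmul, Finset.sum_ite_eq']

lemma unit_mul_diagSum (hmul : ∀ i j k l, E i j * E k l = if j = k then E i l else 0)
    (n k l : ℕ) : E k l * diagSum E n = if l < n then E k l else 0 := by
  simp [diagSum, Finset.mul_sum, hmul]

lemma diagSum_mul_diagSum (hmul : ∀ i j k l, E i j * E k l = if j = k then E i l else 0)
    {m n : ℕ} (h : m ≤ n) : diagSum E n * diagSum E m = diagSum E m := by
  conv_lhs => rw [diagSum.eq_1 E m, Finset.mul_sum]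
  refine Finset.sum_congr rfl fun i hi ↦ ?_
  rw [diagSum_mul_unit hmul, if_pos ((Finset.mem_range.1 hi).trans_le h)]

lemma diagSum_mul_diagSum' (hmul : ∀ i j k l, E i j * E k l = if j = k then E i l else 0)
    {m n : ℕ} (h : m ≤ n) : diagSum E m * diagSum E n = diagSum E m := by
  conv_lhs => rw [diagSum.eq_1 E m, Finset.sum_mul]
  refine Finset.sum_congr rfl fun i hi ↦ ?_
  rw [unit_mul_diagSum hmul, if_pos ((Finset.mem_range.1 hi).trans_le h)]

end MatrixUnits

/-- The kernel of `π` is the stabilization of a purely infinite simple algebra, presented by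
matrix units `E`, and the domain of `π` acts on this kernel as its multiplier algebra. -/
structure IsStableMultiplier {M Q : Type*} [CStarAlgebra M] [CStarAlgebra Q]
    (π : M →⋆ₐ[ℂ] Q) (E : ℕ → ℕ → M) : Prop where
  star_unit : ∀ i j, star (E i j) = E j i
  unit_mul : ∀ i j k l, E i j * E k l = if j = k then E i l else 0
  map_unit : ∀ i j, π (E i j) = 0
  tendsto_left : ∀ b, π b = 0 →
    Filter.Tendsto (fun n ↦ diagSum E n * b) Filter.atTop (nhds b)
  corner : ∀ c, π c = 0 → E 0 0 * c * E 0 0 ≠ 0 → ∃ x y, x * (E 0 0 * c * E 0 0) * y = E 0 0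
  norm_le : ∀ (x : M) (C : ℝ), 0 ≤ C → (∀ b, π b = 0 → ‖x * b‖ ≤ C * ‖b‖) → ‖x‖ ≤ C
  strict_complete : ∀ Y : ℕ → M,
    (∀ b, π b = 0 → CauchySeq (fun n ↦ Y n * b) ∧ CauchySeq (fun n ↦ star (Y n) * b)) →
    ∃ y, ∀ b, π b = 0 → Filter.Tendsto (fun n ↦ Y n * b) Filter.atTop (nhds (y * b)) ∧
      Filter.Tendsto (fun n ↦ star (Y n) * b) Filter.atTop (nhds (star y * b))

namespace IsStableMultiplier

open Filter Topology

variable {M Q : Type*} [CStarAlgebra M] [CStarAlgebra Q]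
  {π : M →⋆ₐ[ℂ] Q} {E : ℕ → ℕ → M}

lemma map_diagSum (H : IsStableMultiplier π E) (n : ℕ) : π (diagSum E n) = 0 := by
  simp [diagSum, H.map_unit]

lemma tendsto_right (H : IsStableMultiplier π E) {b : M} (hb : π b = 0) :
    Tendsto (fun n ↦ b * diagSum E n) atTop (𝓝 b) := by
  have := (H.tendsto_left (star b) (by rw [map_star, hb, star_zero])).star
  simpa [star_diagSum H.star_unit] using this

lemma exists_lt_norm_mul_sub (H : IsStableMultiplier π E) {T : M} (hT : π T ≠ 0) :
    ∃ δ > 0, ∀ n, ∃ m ≥ n, δ < ‖T * (diagSum E m - diagSum E n)‖ := by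
  by_contra! hcon
  refine hT (norm_le_zero_iff.1 (le_of_forall_pos_le_add fun δ hδ ↦ ?_))
  obtain ⟨n, hn⟩ := hcon δ hδ
  have h1 : ‖T - T * diagSum E n‖ ≤ δ := by
    refine H.norm_le _ _ hδ.le fun b hb ↦ ?_
    have h2 : Tendsto (fun m ↦ ‖T * (diagSum E m - diagSum E n) * b‖) atTop
        (𝓝 ‖(T - T * diagSum E n) * b‖) := by
      have := (((H.tendsto_left b hb).sub_const (diagSum E n * b)).const_mul T).norm
      simpa only [sub_mul, mul_sub, mul_assoc] using this
    refine le_of_tendsto h2 ((eventually_ge_atTop n).mono fun m hm ↦ ?_)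
    exact (norm_mul_le _ _).trans (mul_le_mul_of_nonneg_right (hn m hm) (norm_nonneg _))
  calc ‖π T‖ = ‖π (T - T * diagSum E n)‖ := by simp [H.map_diagSum]
    _ ≤ ‖T - T * diagSum E n‖ := NonUnitalStarAlgHom.norm_apply_le π _
    _ ≤ 0 + δ := by simpa using h1

lemma exists_mul_mul_eq_unit (H : IsStableMultiplier π E) {c : M} (hc : π c = 0) (hc0 : c ≠ 0) :
    ∃ X Y, X * c * Y = E 0 0 := by
  obtain ⟨i, j, hij⟩ : ∃ i j, E 0 i * c * E j 0 ≠ 0 := by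
    by_contra! hcon
    have h1 : ∀ n m, diagSum E n * (c * diagSum E m) = 0 := fun n m ↦ by
      simp only [diagSum, Finset.sum_mul, Finset.mul_sum]
      refine Finset.sum_eq_zero fun i _ ↦ Finset.sum_eq_zero fun j _ ↦ ?_
      have e1 : E i i = E i 0 * E 0 i := by simp [H.unit_mul]
      have e2 : E j j = E j 0 * E 0 j := by simp [H.unit_mul]
      rw [e1, e2]
      calc _ = E j 0 * (E 0 j * c * E i 0) * E 0 i := by simp only [mul_assoc]
        _ = 0 := by rw [hcon]; simp
    have h2 : ∀ m, c * diagSum E m = 0 := fun m ↦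
      tendsto_nhds_unique (H.tendsto_left (c * diagSum E m) (by simp [hc])) (by simp [h1])
    exact hc0 (tendsto_nhds_unique (H.tendsto_right hc) (by simp [h2]))
  have e : E 0 0 * (E 0 i * c * E j 0) * E 0 0 = E 0 i * c * E j 0 := by
    calc _ = (E 0 0 * E 0 i) * c * (E j 0 * E 0 0) := by simp only [mul_assoc]
      _ = _ := by simp [H.unit_mul]
  obtain ⟨x, y, hxy⟩ := H.corner (E 0 i * c * E j 0) (by simp [hc]) (by rwa [e])
  refine ⟨x * E 0 i, E j 0 * y, ?_⟩
  rw [← hxy, e]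
  simp only [mul_assoc]

lemma cauchySeq_mul_of_eventually_const (H : IsStableMultiplier π E) {Y : ℕ → M} {C : ℝ}
    (hC : ∀ n, ‖Y n‖ ≤ C) (hY : ∀ K n, K ≤ n → Y n * diagSum E K = Y K * diagSum E K)
    {b : M} (hb : π b = 0) : CauchySeq (fun n ↦ Y n * b) := by
  have hC0 : 0 ≤ C := (norm_nonneg _).trans (hC 0)
  refine cauchySeq_of_le_tendsto_0' (fun K ↦ (C + C) * ‖b - diagSum E K * b‖)
    (fun K n hKn ↦ ?_) ?_
  · have e : Y K * b - Y n * b = (Y K - Y n) * (b - diagSum E K * b) := by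
      rw [mul_sub, ← mul_assoc, sub_mul (Y K) (Y n) (diagSum E K), hY K n hKn]
      simp [sub_mul]
    rw [dist_eq_norm, e]
    refine (norm_mul_le _ _).trans (mul_le_mul_of_nonneg_right ?_ (norm_nonneg _))
    exact (norm_sub_le _ _).trans (add_le_add (hC _) (hC _))
  · have h1 := tendsto_iff_norm_sub_tendsto_zero.1 (H.tendsto_left b hb)
    simpa [norm_sub_rev] using h1.const_mul (C + C)

variable [PartialOrder M] [StarOrderedRing M]

lemma exists_block (H : IsStableMultiplier π E) {T : M} {δ : ℝ} (hδ : 0 < δ) {n m : ℕ}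
    (hnm : n ≤ m) (h : δ < ‖T * (diagSum E m - diagSum E n)‖) :
    ∃ z, (diagSum E m - diagSum E n) * z = z ∧ z * E 0 0 = z ∧
      star z * (star T * T) * z = E 0 0 ∧ (δ ^ 2) • (star z * z) ≤ E 0 0 := by
  set q := diagSum E m - diagSum E n with q_def
  have hq : star q = q := by simp [q_def, star_diagSum H.star_unit]
  have hqq : q * q = q := by
    simp [q_def, mul_sub, sub_mul, diagSum_mul_diagSum H.unit_mul, diagSum_mul_diagSum' H.unit_mul,
      hnm]
  set a := star (T * q) * (T * q) with a_def
  have hqa : q * a = a := by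
    rw [a_def, star_mul, hq, ← mul_assoc q (q * star T), ← mul_assoc q q, hqq]
  have hpa : π a = 0 := by simp [a_def, q_def, H.map_diagSum]
  have hda : δ ^ 2 < ‖a‖ := by
    rw [a_def, CStarRing.norm_star_mul_self, ← pow_two]
    gcongr
  obtain ⟨w, h1, h2, h3⟩ := exists_conjugate_eq_of_lt_norm (p := E 0 0)
    (star_mul_self_nonneg (T * q)) (pow_pos hδ 2) hda (H.star_unit 0 0) (by simp [H.unit_mul])
    (fun u hu ↦ H.exists_mul_mul_eq_unit (by rw [map_mul, ← a_def, hpa, zero_mul]) hu)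
  rw [← a_def] at h1 h2 h3
  have hz : q * (a * w) = a * w := by rw [← mul_assoc, hqa]
  refine ⟨a * w, hz, h3, ?_, h2⟩
  calc star (a * w) * (star T * T) * (a * w)
      = star (q * (a * w)) * (star T * T) * (q * (a * w)) := by rw [hz]
    _ = star (a * w) * (star (T * q) * (T * q)) * (a * w) := by
        simp only [star_mul, mul_assoc]
    _ = E 0 0 := h1

/-- A partial block isometry almost diagonalizing `star T * T`: the pair `(N, Y)` has `Y` supported
on the first `N` rows and the first `k` columns. -/
structure IsApproxDiag (E : ℕ → ℕ → M) (T : M) (d : ℝ) (k : ℕ) (s : ℕ × M) : Prop where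
  le : k ≤ s.1
  left : diagSum E s.1 * s.2 = s.2
  right : s.2 * diagSum E k = s.2
  bound : d • (star s.2 * s.2) ≤ diagSum E k
  approx : ‖star s.2 * (star T * T) * s.2 - diagSum E k‖ ≤ 1 / 2 - (1 / 2) ^ (k + 1)

lemma IsApproxDiag.exists_succ (H : IsStableMultiplier π E) {T : M} {δ : ℝ} (hδ : 0 < δ)
    (hT : ∀ n, ∃ m ≥ n, δ < ‖T * (diagSum E m - diagSum E n)‖) {k : ℕ} {s : ℕ × M}
    (hs : IsApproxDiag E T (δ ^ 2) k s) :
    ∃ s' : ℕ × M, IsApproxDiag E T (δ ^ 2) (k + 1) s' ∧ diagSum E s.1 * s'.2 = s.2 ∧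
      s'.2 * diagSum E k = s.2 := by
  obtain ⟨N, Y⟩ := s
  obtain ⟨hle, hleft, hright, hbound, happ⟩ := hs
  simp only at hle hleft hright hbound happ
  set S := star T * T with S_def
  have hS : star S = S := by simp [S_def]
  set C := √(1 / δ ^ 2) with C_def
  have hC : 0 < C := by positivity
  have hY0 : π Y = 0 := by rw [← hleft]; simp [H.map_diagSum]
  obtain ⟨n, hNn, hn⟩ : ∃ n ≥ N + 1,
      ‖star Y * S - star Y * S * diagSum E n‖ ≤ (1 / 2) ^ (k + 3) / C := by
    have h1 := (tendsto_iff_norm_sub_tendsto_zero.1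
      (H.tendsto_right (b := star Y * S) (by rw [map_mul, map_star, hY0, star_zero, zero_mul])))
    have h2 := (h1.eventually_le_const (u := (1 / 2) ^ (k + 3) / C) (by positivity)).and
      (eventually_ge_atTop (N + 1))
    obtain ⟨n, h3, h4⟩ := h2.exists
    exact ⟨n, h4, by rwa [norm_sub_rev]⟩
  obtain ⟨m, hnm, hm⟩ := hT n
  obtain ⟨z, hqz, hzp, hzS, hzb⟩ := H.exists_block hδ hnm hm
  have hPz : ∀ l ≤ n, diagSum E l * z = 0 := fun l hl ↦ by
    rw [← hqz, ← mul_assoc, mul_sub, diagSum_mul_diagSum' H.unit_mul hl,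
      diagSum_mul_diagSum' H.unit_mul (hl.trans hnm), sub_self, zero_mul]
  have hPmz : diagSum E m * z = z := by
    rw [← hqz, ← mul_assoc, mul_sub, diagSum_mul_diagSum H.unit_mul le_rfl,
      diagSum_mul_diagSum H.unit_mul hnm]
  set w := z * E 0 k with w_def
  have hsw : star w = E k 0 * star z := by rw [w_def, star_mul, H.star_unit]
  have hPw : ∀ l ≤ n, diagSum E l * w = 0 := fun l hl ↦ by
    rw [w_def, ← mul_assoc, hPz l hl, zero_mul]
  have hwP : w * diagSum E k = 0 := by
    rw [w_def, mul_assoc, unit_mul_diagSum H.unit_mul]; simp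
  have hwP' : w * diagSum E (k + 1) = w := by
    rw [w_def, mul_assoc, unit_mul_diagSum H.unit_mul]; simp
  have hconj : ∀ x, star w * x * w = star (E 0 k) * (star z * x * z) * E 0 k := fun x ↦ by
    rw [w_def, star_mul]; simp only [mul_assoc]
  have hEk : star (E 0 k) * E 0 0 * E 0 k = E k k := by
    simp [H.star_unit, H.unit_mul]
  have hwS : star w * S * w = E k k := by rw [hconj, hzS, hEk]
  have hwb : (δ ^ 2) • (star w * w) ≤ E k k := by
    have := star_left_conjugate_le_conjugate hzb (E 0 k)
    rw [hEk] at this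
    refine le_of_eq_of_le ?_ this
    rw [w_def, star_mul]
    simp only [mul_smul_comm, smul_mul_assoc, mul_assoc]
  have hwC : ‖w‖ ≤ C := norm_le_of_smul_star_mul_self_le_one (pow_pos hδ 2)
    (hwb.trans (le_one_of_star_eq_of_mul_self_eq (H.star_unit k k) (by simp [H.unit_mul])))
  have hYw : star Y * w = 0 := by
    rw [← hleft, star_mul, star_diagSum H.star_unit, mul_assoc, hPw N (by omega), mul_zero]
  have hwY : star w * Y = 0 := by
    rw [← star_star Y, ← star_mul, hYw, star_zero]
  have hYSw : ‖star Y * S * w‖ ≤ (1 / 2) ^ (k + 3) := by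
    have e : star Y * S * w = (star Y * S - star Y * S * diagSum E n) * w := by
      rw [sub_mul, mul_assoc (star Y * S) (diagSum E n), hPw n le_rfl, mul_zero, sub_zero]
    rw [e]
    calc _ ≤ (1 / 2) ^ (k + 3) / C * C := by
          exact (norm_mul_le _ _).trans (mul_le_mul hn hwC (norm_nonneg _) (by positivity))
      _ = _ := div_mul_cancel₀ _ hC.ne'
  have hwSY : ‖star w * S * Y‖ ≤ (1 / 2) ^ (k + 3) := by
    have e : star w * S * Y = star (star Y * S * w) := by
      simp only [star_mul, star_star, hS, mul_assoc]
    rwa [e, norm_star]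
  have hYP : Y * diagSum E (k + 1) = Y := by
    rw [← hright, mul_assoc, diagSum_mul_diagSum' H.unit_mul (Nat.le_succ k)]
  refine ⟨(m, Y + w), ⟨?_, ?_, ?_, ?_, ?_⟩, ?_, ?_⟩
  · simp only; omega
  · simp only [mul_add]
    congr 1
    · rw [← hleft, ← mul_assoc, diagSum_mul_diagSum H.unit_mul (by omega)]
    · rw [w_def, ← mul_assoc, hPmz]
  · simp only [add_mul, hYP, hwP']
  · simp only [star_add, mul_add, add_mul, hYw, hwY, diagSum_succ]
    rw [add_zero, zero_add, smul_add]
    exact add_le_add hbound hwb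
  · have e : star (Y + w) * S * (Y + w) - diagSum E (k + 1) =
        (star Y * S * Y - diagSum E k) + star Y * S * w + star w * S * Y := by
      rw [star_add, diagSum_succ, ← hwS]; noncomm_ring
    simp only
    rw [e]
    calc _ ≤ (1 / 2 - (1 / 2) ^ (k + 1)) + (1 / 2) ^ (k + 3) + (1 / 2) ^ (k + 3) :=
          norm_add₃_le.trans (by gcongr)
      _ = 1 / 2 - (1 / 2) ^ (k + 1 + 1) := by ring
  · simp only [mul_add, hleft, hPw N (by omega), add_zero]
  · simp only [add_mul, hright, hwP, add_zero]

lemma IsApproxDiag.norm_le (H : IsStableMultiplier π E) {T : M} {d : ℝ} (hd : 0 < d) {k : ℕ}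
    {s : ℕ × M} (hs : IsApproxDiag E T d k s) : ‖s.2‖ ≤ √(1 / d) :=
  norm_le_of_smul_star_mul_self_le_one hd
    (hs.bound.trans (le_one_of_star_eq_of_mul_self_eq (star_diagSum H.star_unit k)
      (diagSum_mul_diagSum H.unit_mul le_rfl)))

theorem exists_mul_mul_eq_one (H : IsStableMultiplier π E) {T : M} (hT : π T ≠ 0) :
    ∃ x y, x * T * y = 1 := by
  obtain ⟨δ, hδ, hδT⟩ := H.exists_lt_norm_mul_sub hT
  have hstep : ∀ k (s : {s : ℕ × M // IsApproxDiag E T (δ ^ 2) k s}),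
      ∃ s' : {s : ℕ × M // IsApproxDiag E T (δ ^ 2) (k + 1) s},
        diagSum E s.1.1 * s'.1.2 = s.1.2 ∧ s'.1.2 * diagSum E k = s.1.2 := fun k s ↦ by
    obtain ⟨s', h1, h2⟩ := IsApproxDiag.exists_succ H hδ hδT s.2
    exact ⟨⟨s', h1⟩, h2⟩
  choose next hnext using hstep
  have hzero : IsApproxDiag E T (δ ^ 2) 0 (0, 0) := by
    constructor <;> simp [diagSum]
  let seq : ∀ k, {s : ℕ × M // IsApproxDiag E T (δ ^ 2) k s} :=
    fun k ↦ Nat.rec ⟨(0, 0), hzero⟩ next k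
  set Y : ℕ → M := fun n ↦ (seq n).1.2 with Y_def
  have hY : ∀ n, IsApproxDiag E T (δ ^ 2) n ((seq n).1.1, Y n) := fun n ↦ (seq n).2
  have hsucc : ∀ n, diagSum E (seq n).1.1 * Y (n + 1) = Y n ∧ Y (n + 1) * diagSum E n = Y n :=
    fun n ↦ hnext n (seq n)
  set C := √(1 / δ ^ 2) with C_def
  have hC : ∀ n, ‖Y n‖ ≤ C := fun n ↦ IsApproxDiag.norm_le H (pow_pos hδ 2) (hY n)
  have hC0 : 0 ≤ C := Real.sqrt_nonneg _
  have hconst : ∀ K n, K ≤ n → Y n * diagSum E K = Y K * diagSum E K := fun K n hKn ↦ by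
    induction n, hKn using Nat.le_induction with
    | base => rfl
    | succ n hn ih =>
      rw [← ih, ← (hsucc n).2, mul_assoc, diagSum_mul_diagSum H.unit_mul hn]
  have hconst' : ∀ K n, K ≤ n → star (Y n) * diagSum E K = star (Y K) * diagSum E K := by
    intro K n hKn
    rw [← star_diagSum H.star_unit, ← star_mul, ← star_mul]
    congr 1
    induction n, hKn using Nat.le_induction with
    | base => rfl
    | succ n hn ih =>
      rw [← ih]
      conv_rhs => rw [← (hsucc n).1]
      rw [← mul_assoc, diagSum_mul_diagSum' H.unit_mul (hn.trans (hY n).le)]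
  obtain ⟨y, hy⟩ := H.strict_complete Y fun b hb ↦
    ⟨H.cauchySeq_mul_of_eventually_const hC hconst hb,
      H.cauchySeq_mul_of_eventually_const (fun n ↦ by rw [norm_star]; exact hC n) hconst' hb⟩
  set S := star T * T with S_def
  have hlim : ∀ b, π b = 0 → Tendsto (fun n ↦ star (Y n) * S * Y n * b) atTop
      (𝓝 (star y * S * y * b)) := fun b hb ↦ by
    have h1 : Tendsto (fun n ↦ star (Y n) * (S * (Y n * b - y * b))) atTop (𝓝 0) := by
      have h2 := ((tendsto_sub_nhds_zero_iff.2 (hy b hb).1).const_mul S).norm.const_mul C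
      simp only [mul_zero, norm_zero] at h2
      exact squeeze_zero_norm (fun n ↦ (norm_mul_le _ _).trans
        (mul_le_mul_of_nonneg_right (by rw [norm_star]; exact hC n) (norm_nonneg _))) h2
    have h3 := h1.add (hy (S * (y * b)) (by simp [hb])).2
    rw [zero_add, ← mul_assoc S, ← mul_assoc, ← mul_assoc] at h3
    refine h3.congr fun n ↦ ?_
    · simp only [mul_sub, mul_assoc]; abel
  have hnear : ‖star y * S * y - 1‖ ≤ 1 / 2 := by
    refine H.norm_le _ _ (by norm_num) fun b hb ↦ ?_
    have h1 : Tendsto (fun n ↦ ‖(star (Y n) * S * Y n - diagSum E n) * b‖) atTop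
        (𝓝 ‖(star y * S * y - 1) * b‖) := by
      simpa only [sub_mul, one_mul] using ((hlim b hb).sub (H.tendsto_left b hb)).norm
    refine le_of_tendsto h1 (Eventually.of_forall fun n ↦ (norm_mul_le _ _).trans ?_)
    refine mul_le_mul_of_nonneg_right ((hY n).approx.trans ?_) (norm_nonneg _)
    have : (0 : ℝ) < (1 / 2) ^ (n + 1) := by positivity
    linarith
  have hunit : IsUnit (star y * S * y) := by
    have := isUnit_one_sub_of_norm_lt_one (x := 1 - star y * S * y)
      (by rw [norm_sub_rev]; linarith)
    simpa using this
  obtain ⟨v, hv⟩ := hunit.exists_left_inv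
  refine ⟨v * star y * star T, y, ?_⟩
  rw [← hv, S_def]
  simp only [mul_assoc]

end IsStableMultiplier

namespace DoubleCentralizer

open Filter Topology

variable {B : Type*} [NonUnitalCStarAlgebra B]

lemma fst_mul (x : 𝓜(ℂ, B)) (b c : B) : x.fst (b * c) = x.fst b * c := by
  have h : ∀ a, a * (x.fst (b * c) - x.fst b * c) = 0 := fun a ↦ by
    rw [mul_sub, ← x.central, ← mul_assoc, x.central, mul_assoc, sub_self]
  exact sub_eq_zero.1 (CStarRing.star_mul_self_eq_zero_iff _ |>.1 (h _))

lemma mul_coe (x : 𝓜(ℂ, B)) (b : B) : x * (b : 𝓜(ℂ, B)) = (x.fst b : 𝓜(ℂ, B)) := by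
  ext c
  · simpa using fst_mul x b c
  · simp [x.central]

lemma norm_coe (b : B) : ‖(b : 𝓜(ℂ, B))‖ = ‖b‖ := by
  rw [← norm_fst, coe_fst]
  simp

lemma coe_mul (a b : B) : ((a * b : B) : 𝓜(ℂ, B)) = (a : 𝓜(ℂ, B)) * (b : 𝓜(ℂ, B)) := by
  rw [mul_coe]; simp

lemma norm_le_of_forall_mul_coe {x : 𝓜(ℂ, B)} {C : ℝ} (hC : 0 ≤ C)
    (h : ∀ b : B, ‖x * (b : 𝓜(ℂ, B))‖ ≤ C * ‖(b : 𝓜(ℂ, B))‖) : ‖x‖ ≤ C := by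
  rw [← norm_fst]
  refine ContinuousLinearMap.opNorm_le_bound _ hC fun b ↦ ?_
  have := h b
  rwa [mul_coe, norm_coe, norm_coe] at this

lemma isometry_coe : Isometry (fun b : B ↦ (b : 𝓜(ℂ, B))) :=
  AddMonoidHomClass.isometry_of_norm (coeHom (𝕜 := ℂ) (A := B)) norm_coe

lemma exists_tendsto_of_cauchySeq_coe {u : ℕ → B}
    (hu : CauchySeq fun n ↦ (u n : 𝓜(ℂ, B))) : ∃ c, Tendsto u atTop (𝓝 c) :=
  cauchySeq_tendsto_of_complete
    (isometry_coe.isUniformInducing.cauchy_map_iff.1 (by rw [map_map]; exact hu))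

lemma exists_tendsto_mul_coe {Y : ℕ → 𝓜(ℂ, B)}
    (hY : ∀ b : B, CauchySeq (fun n ↦ Y n * (b : 𝓜(ℂ, B))) ∧
      CauchySeq (fun n ↦ star (Y n) * (b : 𝓜(ℂ, B)))) :
    ∃ y : 𝓜(ℂ, B), ∀ b : B,
      Tendsto (fun n ↦ Y n * (b : 𝓜(ℂ, B))) atTop (𝓝 (y * (b : 𝓜(ℂ, B)))) ∧
      Tendsto (fun n ↦ star (Y n) * (b : 𝓜(ℂ, B))) atTop (𝓝 (star y * (b : 𝓜(ℂ, B)))) := by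
  have hL : ∀ b : B, ∃ c : B, Tendsto (fun n ↦ (Y n).fst b) atTop (𝓝 c) := fun b ↦ by
    have := (hY b).1
    simp only [mul_coe] at this
    exact exists_tendsto_of_cauchySeq_coe this
  have hR : ∀ b : B, ∃ c : B, Tendsto (fun n ↦ (Y n).snd b) atTop (𝓝 c) := fun b ↦ by
    have := (hY (star b)).2
    simp only [mul_coe, star_fst, star_star] at this
    obtain ⟨c, hc⟩ := exists_tendsto_of_cauchySeq_coe this
    exact ⟨star c, by simpa only [star_star] using hc.star⟩
  choose L hL using hL
  choose R hR using hR
  let y : 𝓜(ℂ, B) :=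
    { toProd := (continuousLinearMapOfTendsto (fun n ↦ (Y n).fst) (tendsto_pi_nhds.2 hL),
        continuousLinearMapOfTendsto (fun n ↦ (Y n).snd) (tendsto_pi_nhds.2 hR))
      central := fun a b ↦ by
        change R a * b = a * L b
        refine tendsto_nhds_unique ((hR a).mul_const b) ?_
        simp only [central]
        exact (hL b).const_mul a }
  refine ⟨y, fun b ↦ ⟨?_, ?_⟩⟩
  · simp only [mul_coe]
    exact (isometry_coe.continuous.tendsto _).comp (hL b)
  · simp only [mul_coe, star_fst]
    exact (isometry_coe.continuous.tendsto _).comp (hR (star b)).star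

end DoubleCentralizer

/-- `B = A ⊗ K` with `A` unital purely infinite simple is modelled by a
system of matrix units whose diagonal sums form an approximate identity and whose corner
`e₀₀ B e₀₀` (a copy of `A`, with unit `e₀₀`) is purely infinite and simple (Cuntz's
characterization: every nonzero corner element can be multiplied to the unit `e₀₀`,
and the corner is noncommutative).  Then both the multiplier algebra `𝓜(ℂ, B)` and the
corona `M(B)/B` (modelled by a surjective `π` with kernel `B`) have property (P1). -/
theorem stmt17 {B : Type*} [NonUnitalCStarAlgebra B] {Q : Type*} [CStarAlgebra Q]
    (e : ℕ → ℕ → B)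
    (he_star : ∀ i j, star (e i j) = e j i)
    (he_mul : ∀ i j k l, e i j * e k l = if j = k then e i l else 0)
    (he_ne : ∀ i, e i i ≠ 0)
    (happrox : ∀ b : B,
      Filter.Tendsto (fun n => ‖(∑ i ∈ Finset.range n, e i i) * b - b‖)
        Filter.atTop (nhds 0) ∧
      Filter.Tendsto (fun n => ‖b * (∑ i ∈ Finset.range n, e i i) - b‖)
        Filter.atTop (nhds 0))
    -- the corner e₀₀ B e₀₀ ≅ A is purely infinite and simple
    (hpi : ∀ b : B, e 0 0 * b * e 0 0 ≠ 0 →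
      ∃ x y : B, (e 0 0 * x * e 0 0) * (e 0 0 * b * e 0 0) * (e 0 0 * y * e 0 0) = e 0 0)
    (hnc : ∃ x y : B,
      (e 0 0 * x * e 0 0) * (e 0 0 * y * e 0 0) ≠ (e 0 0 * y * e 0 0) * (e 0 0 * x * e 0 0))
    (π : 𝓜(ℂ, B) →⋆ₐ[ℂ] Q) (hsurj : Function.Surjective π)
    (hker : ∀ x : 𝓜(ℂ, B), π x = 0 ↔ ∃ b : B, x = (b : 𝓜(ℂ, B))) :
    PropP1 𝓜(ℂ, B) ∧ PropP1 Q := by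
  have hker' : ∀ b : B, π (b : 𝓜(ℂ, B)) = 0 := fun b ↦ (hker _).2 ⟨b, rfl⟩
  have hmap : ∀ c, π c = 0 → ∃ b : B, c = (b : 𝓜(ℂ, B)) := fun c ↦ (hker c).1
  set E : ℕ → ℕ → 𝓜(ℂ, B) := fun i j ↦ (e i j : 𝓜(ℂ, B)) with E_def
  have hP : ∀ n, diagSum E n = ((∑ i ∈ Finset.range n, e i i : B) : 𝓜(ℂ, B)) := fun n ↦
    (map_sum (DoubleCentralizer.coeHom (𝕜 := ℂ) (A := B)) (fun i ↦ e i i) (Finset.range n)).symm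
  have H : IsStableMultiplier π E :=
    { star_unit := fun i j ↦ by
        simp only [E_def, ← he_star i j]
        exact (map_star (DoubleCentralizer.coeHom (𝕜 := ℂ) (A := B)) (e i j)).symm
      unit_mul := fun i j k l ↦ by
        simp only [E_def, ← DoubleCentralizer.coe_mul, he_mul]
        split_ifs
        · rfl
        · exact map_zero (DoubleCentralizer.coeHom (𝕜 := ℂ) (A := B))
      map_unit := fun i j ↦ hker' _
      tendsto_left := fun c hc ↦ by
        obtain ⟨b, rfl⟩ := hmap c hc
        simp only [hP, ← DoubleCentralizer.coe_mul]
        exact (DoubleCentralizer.isometry_coe.continuous.tendsto b).comp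
          (tendsto_iff_norm_sub_tendsto_zero.2 (happrox b).1)
      corner := fun c hc h ↦ by
        obtain ⟨b, rfl⟩ := hmap c hc
        simp only [E_def, ← DoubleCentralizer.coe_mul] at h ⊢
        obtain ⟨x, y, hxy⟩ := hpi b fun h0 ↦ h (by
          rw [h0]; exact map_zero (DoubleCentralizer.coeHom (𝕜 := ℂ) (A := B)))
        refine ⟨((e 0 0 * x * e 0 0 : B) : 𝓜(ℂ, B)), ((e 0 0 * y * e 0 0 : B) : 𝓜(ℂ, B)), ?_⟩
        rw [← DoubleCentralizer.coe_mul, ← DoubleCentralizer.coe_mul, hxy]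
      norm_le := fun x C hC h ↦
        DoubleCentralizer.norm_le_of_forall_mul_coe hC fun b ↦ h _ (hker' b)
      strict_complete := fun Y hY ↦ by
        obtain ⟨y, hy⟩ := DoubleCentralizer.exists_tendsto_mul_coe fun b ↦ hY _ (hker' b)
        refine ⟨y, fun c hc ↦ ?_⟩
        obtain ⟨b, rfl⟩ := hmap c hc
        exact hy b }
  let _ := CStarAlgebra.spectralOrder 𝓜(ℂ, B)
  have := CStarAlgebra.spectralOrderedRing 𝓜(ℂ, B)
  have hcont : Continuous π := AddMonoidHomClass.continuous_of_bound π 1 fun x ↦ by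
    simpa using NonUnitalStarAlgHom.norm_apply_le π x
  have hone : π 1 ≠ 0 := fun h ↦ by
    obtain ⟨b, hb⟩ := hmap 1 h
    have hlim := H.tendsto_left 1 h
    simp only [mul_one] at hlim
    have h1 : ∀ n, 1 ≤ ‖diagSum E n - 1‖ := fun n ↦ by
      have hne : 0 < ‖E n n‖ := by
        rw [E_def, DoubleCentralizer.norm_coe]; exact norm_pos_iff.2 (he_ne n)
      have h2 : (diagSum E n - 1) * E n n = -E n n := by
        rw [sub_mul, diagSum_mul_unit H.unit_mul]; simp
      have h3 := norm_mul_le (diagSum E n - 1) (E n n)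
      rw [h2, norm_neg] at h3
      exact le_of_mul_le_mul_right (by linarith) hne
    have h4 := ge_of_tendsto' (tendsto_iff_norm_sub_tendsto_zero.1 hlim) h1
    norm_num at h4
  refine ⟨fun T hT ↦ H.exists_mul_mul_eq_one fun h0 ↦ hone
    (IsFullIn.map_eq_zero (π : 𝓜(ℂ, B) →+* Q) hcont hT h0 1), fun q hq ↦ ?_⟩
  · by_cases hq0 : q = 0
    · have h1 := IsFullIn.map_eq_zero (RingHom.id Q) continuous_id hq hq0 1
      exact ⟨1, 1, by simpa [hq0] using h1.symm⟩
    · obtain ⟨T, rfl⟩ := hsurj q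
      obtain ⟨x, y, hxy⟩ := H.exists_mul_mul_eq_one hq0
      exact ⟨π x, π y, by rw [← map_mul, ← map_mul, hxy, map_one]⟩
end

section
/- Let A be a separable C*-algebra with a closed two-sided ideal I, let B be a unital C*-algebra with property (P1), and let j : A → B be an embedding such that j(a) is full in B for every a ∉ I. Then for any pure state φ : A → ℂ vanishing on I, any finite subset F ⊆ A, and any ε > 0, there exists a partial isometry V ∈ B with V*V = 1_B, VV* in the hereditary subalgebra generated by j(A), and ‖φ(a)·1_B − V*·j(a)·V‖ < ε for all a ∈ F. -/
open scoped ENNReal MultiplierAlgebra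

open scoped ComplexOrder

section Convexity

variable {E : Type*} [AddCommGroup E] [Module ℝ E] [TopologicalSpace E]
  [IsTopologicalAddGroup E] [ContinuousSMul ℝ E]

/-- The convex join of two compact sets is compact. -/
theorem IsCompact.convexJoin {C D : Set E} (hC : IsCompact C) (hD : IsCompact D) :
    IsCompact (_root_.convexJoin ℝ C D) := by
  have key : _root_.convexJoin ℝ C D =
      (fun p : ℝ × E × E ↦ (1 - p.1) • p.2.1 + p.1 • p.2.2) '' (Set.Icc 0 1 ×ˢ C ×ˢ D) := by
    ext z
    simp only [mem_convexJoin, segment_eq_image, Set.mem_image, Set.mem_prod, Prod.exists]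
    constructor
    · rintro ⟨x, hx, y, hy, t, ht, rfl⟩
      exact ⟨t, x, y, ⟨ht, hx, hy⟩, rfl⟩
    · rintro ⟨t, x, y, ⟨ht, hx, hy⟩, rfl⟩
      exact ⟨x, hx, y, hy, t, ht, rfl⟩
  rw [key]
  exact (isCompact_Icc.prod (hC.prod hD)).image (by fun_prop)

/-- An extreme point of a convex set `K` can be kept out of a compact convex subset of `K`
containing finitely many given compact convex subsets that avoid it. -/
theorem exists_isCompact_convex_notMem_of_mem_extremePoints {ι : Type*} {K : Set E}
    (hK : Convex ℝ K) {x : E} (hx : x ∈ K.extremePoints ℝ) {C : Set E} (hCK : C ⊆ K)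
    (hCne : C.Nonempty) (hC : Convex ℝ C) (hCc : IsCompact C) (hxC : x ∉ C)
    (s : Finset ι) (D : ι → Set E) (hDK : ∀ i ∈ s, D i ⊆ K) (hD : ∀ i ∈ s, Convex ℝ (D i))
    (hDc : ∀ i ∈ s, IsCompact (D i)) (hxD : ∀ i ∈ s, x ∉ D i) :
    ∃ L : Set E, L ⊆ K ∧ Convex ℝ L ∧ IsCompact L ∧ x ∉ L ∧ C ⊆ L ∧ ∀ i ∈ s, D i ⊆ L := by
  classical
  induction s using Finset.induction_on with
  | empty => exact ⟨C, hCK, hC, hCc, hxC, subset_rfl, by simp⟩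
  | insert i s _ ih =>
    simp only [Finset.forall_mem_insert] at *
    obtain ⟨L, hLK, hL, hLc, hxL, hCL, hDL⟩ := ih hDK.2 hD.2 hDc.2 hxD.2
    obtain hi | hi := (D i).eq_empty_or_nonempty
    · exact ⟨L, hLK, hL, hLc, hxL, hCL, by simp [hi], hDL⟩
    have hLJ : L ⊆ convexJoin ℝ L (D i) := subset_convexJoin_left hi
    refine ⟨convexJoin ℝ L (D i), convexJoin_subset hLK hDK.1 hK, hL.convexJoin hD.1,
      hLc.convexJoin hDc.1, fun hmem ↦ ?_, hCL.trans hLJ,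
      subset_convexJoin_right (hCne.mono hCL), fun k hk ↦ (hDL k hk).trans hLJ⟩
    obtain ⟨y, hy, z, hz, hxyz⟩ := mem_convexJoin.1 hmem
    rcases (mem_extremePoints_iff_forall_segment.1 hx).2 y (hLK hy) z (hDK.1 hz) hxyz with rfl | rfl
    · exact hxL hy
    · exact hxD.1 hz

end Convexity

section Positive

variable {A : Type*} [NonUnitalCStarAlgebra A]

/-- The positive functionals of norm at most one, as a subset of the weak dual. -/
def positiveContractions (A : Type*) [NonUnitalCStarAlgebra A] : Set (WeakDual ℂ A) :=
  {ψ | (∀ a : A, 0 ≤ ψ (star a * a)) ∧ ∀ a : A, ‖ψ a‖ ≤ ‖a‖}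

theorem convex_positiveContractions : Convex ℝ (positiveContractions A) := by
  intro ψ hψ χ hχ s t hs ht hst
  refine ⟨fun a ↦ ?_, fun a ↦ ?_⟩
  · change 0 ≤ s • ψ (star a * a) + t • χ (star a * a)
    exact add_nonneg (smul_nonneg hs (hψ.1 a)) (smul_nonneg ht (hχ.1 a))
  · change ‖s • ψ a + t • χ a‖ ≤ _
    calc _ ≤ s * ‖ψ a‖ + t * ‖χ a‖ := by
          refine (norm_add_le _ _).trans_eq ?_
          simp [abs_of_nonneg, hs, ht]
      _ ≤ s * ‖a‖ + t * ‖a‖ := by gcongr <;> [exact hψ.2 a; exact hχ.2 a]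
      _ = ‖a‖ := by rw [← add_mul, hst, one_mul]

theorem WeakDual.convex_setOf_le_re_apply (a : A) (r : ℝ) :
    Convex ℝ {ψ : WeakDual ℂ A | r ≤ (ψ a).re} := by
  intro ψ hψ χ hχ s t hs ht hst
  change r ≤ (s • ψ a + t • χ a).re
  rw [Complex.add_re, Complex.smul_re, Complex.smul_re, smul_eq_mul, smul_eq_mul]
  calc r = s * r + t * r := by rw [← add_mul, hst, one_mul]
    _ ≤ s * (ψ a).re + t * (χ a).re := by gcongr <;> assumption

theorem isCompact_positiveContractions : IsCompact (positiveContractions A) := by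
  refine (WeakDual.isCompact_closedBall (0 : StrongDual ℂ A) 1).of_isClosed_subset ?_ ?_
  · simp only [positiveContractions, Set.ofPred_and, Set.ofPred_forall]
    refine (isClosed_iInter fun a ↦ ?_).inter (isClosed_iInter fun a ↦ ?_)
    · exact isClosed_le continuous_const (WeakDual.eval_continuous _)
    · exact isClosed_le (WeakDual.eval_continuous _).norm continuous_const
  · intro ψ hψ
    rw [Set.mem_preimage, mem_closedBall_zero_iff]
    exact ContinuousLinearMap.opNorm_le_bound _ zero_le_one fun a ↦ by simpa using hψ.2 a

theorem mem_extremePoints_positiveContractions {φ : A →L[ℂ] ℂ}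
    (hpos : ∀ a : A, 0 ≤ φ (star a * a)) (hnorm : ‖φ‖ = 1)
    (hpure : ∀ ψ : A →L[ℂ] ℂ, (∀ a : A, 0 ≤ ψ (star a * a)) →
      (∀ a : A, 0 ≤ φ (star a * a) - ψ (star a * a)) → ∃ t : ℝ, ψ = (t : ℂ) • φ) :
    StrongDual.toWeakDual φ ∈ (positiveContractions A).extremePoints ℝ := by
  refine ⟨⟨hpos, fun a ↦ by simpa [hnorm] using φ.le_opNorm a⟩, ?_⟩
  rintro ψ hψ χ hχ ⟨s, t, hs, ht, hst, h⟩
  have hle : ∀ ω ∈ positiveContractions A, ‖WeakDual.toStrongDual ω‖ ≤ 1 := fun ω hω ↦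
    ContinuousLinearMap.opNorm_le_bound _ zero_le_one fun a ↦ by simpa using hω.2 a
  have hφ (a : A) : φ a = s * ψ a + t * χ a := by
    rw [← StrongDual.toWeakDual_apply, ← h]; rfl
  obtain ⟨r, hr⟩ := hpure ((s : ℂ) • WeakDual.toStrongDual ψ)
    (fun a ↦ mul_nonneg (by exact_mod_cast hs.le) (hψ.1 a))
    (fun a ↦ by
      rw [hφ]
      simpa using mul_nonneg (by exact_mod_cast ht.le) (hχ.1 a))
  have hr' : (t : ℂ) • WeakDual.toStrongDual χ = ((1 - r : ℝ) : ℂ) • φ := by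
    ext a
    have := congr($hr a)
    simp only [smul_apply, smul_eq_mul, WeakDual.toStrongDual_apply] at this ⊢
    push_cast
    linear_combination -(hφ a) - this
  have h1 : |r| ≤ s := by
    have := congr(‖$hr‖)
    rw [norm_smul, norm_smul, hnorm] at this
    simp [abs_of_pos hs] at this
    nlinarith [hle ψ hψ]
  have h2 : |1 - r| ≤ t := by
    have := congr(‖$hr'‖)
    rw [norm_smul, norm_smul, hnorm, Complex.norm_real, Complex.norm_real] at this
    simp [abs_of_pos ht] at this
    nlinarith [hle χ hχ]
  have hrs : r = s := by linarith [le_abs_self r, le_abs_self (1 - r)]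
  subst hrs
  apply WeakDual.toStrongDual.injective
  exact smul_right_injective _ (by exact_mod_cast hs.ne' : (r : ℂ) ≠ 0) hr

theorem apply_nonneg_of_nonneg [PartialOrder A] [StarOrderedRing A] {ψ : A →ₗ[ℂ] ℂ}
    (hψ : ∀ a : A, 0 ≤ ψ (star a * a)) {a : A} (ha : 0 ≤ a) : 0 ≤ ψ a := by
  obtain ⟨b, rfl⟩ := CStarAlgebra.nonneg_iff_eq_star_mul_self.1 ha
  exact hψ b

theorem im_apply_eq_zero {ψ : A →ₗ[ℂ] ℂ} (hψ : ∀ a : A, 0 ≤ ψ (star a * a)) {a : A}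
    (ha : IsSelfAdjoint a) : (ψ a).im = 0 := by
  let := CStarAlgebra.spectralOrder A
  let := CStarAlgebra.spectralOrderedRing A
  have h := CFC.posPart_sub_negPart a ha
  have h1 := (Complex.nonneg_iff.1 (apply_nonneg_of_nonneg hψ (CFC.posPart_nonneg a))).2
  have h2 := (Complex.nonneg_iff.1 (apply_nonneg_of_nonneg hψ (CFC.negPart_nonneg a))).2
  rw [← h, map_sub, Complex.sub_im, ← h1, ← h2, sub_zero]

theorem re_apply_realPart {ψ : A →ₗ[ℂ] ℂ} (hψ : ∀ a : A, 0 ≤ ψ (star a * a)) (a : A) :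
    (ψ (realPart a : A)).re = (ψ a).re := by
  conv_rhs => rw [← realPart_add_I_smul_imaginaryPart a]
  simp [im_apply_eq_zero hψ (imaginaryPart a).2]

/-- **Slices at a pure state**: for a pure state `φ`, every weak neighbourhood of `φ` within the
positive contractive functionals contains a slice cut out by a self-adjoint element of `A`. -/
theorem exists_slice {φ : A →L[ℂ] ℂ} (hpos : ∀ a : A, 0 ≤ φ (star a * a)) (hnorm : ‖φ‖ = 1)
    (hpure : ∀ ψ : A →L[ℂ] ℂ, (∀ a : A, 0 ≤ ψ (star a * a)) →
      (∀ a : A, 0 ≤ φ (star a * a) - ψ (star a * a)) → ∃ t : ℝ, ψ = (t : ℂ) • φ)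
    (G : Finset A) {η : ℝ} (hη : 0 < η) :
    ∃ (s : A) (β : ℝ), IsSelfAdjoint s ∧ 0 < β ∧ β < (φ s).re ∧
      ∀ ψ : A →L[ℂ] ℂ, (∀ a : A, 0 ≤ ψ (star a * a)) → (∀ a : A, ‖ψ a‖ ≤ ‖a‖) → β ≤ (ψ s).re →
        ∀ x ∈ G, (ψ x).re < (φ x).re + η := by
  have hφ := mem_extremePoints_positiveContractions hpos hnorm hpure
  have hφ0 : φ ≠ 0 := norm_ne_zero_iff.1 (hnorm ▸ one_ne_zero)
  have : IsScalarTower ℝ ℂ (WeakDual ℂ A) :=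
    inferInstanceAs (IsScalarTower ℝ ℂ (StrongDual ℂ A))
  have : ContinuousSMul ℝ (WeakDual ℂ A) := IsScalarTower.continuousSMul ℂ
  have key := @exists_isCompact_convex_notMem_of_mem_extremePoints (WeakDual ℂ A) _ _ _ _ _ A
  obtain ⟨L, hLK, hL, hLc, hφL, h0L, hDL⟩ := key convex_positiveContractions hφ
      (C := {0}) (Set.singleton_subset_iff.2
        ⟨fun _ ↦ le_rfl, fun a ↦ norm_zero.trans_le (norm_nonneg a)⟩)
      (Set.singleton_nonempty _) (convex_singleton _) isCompact_singleton (by simpa using hφ0) G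
      (fun x ↦ positiveContractions A ∩ {ψ | (φ x).re + η ≤ (ψ x).re})
      (fun x _ ↦ Set.inter_subset_left)
      (fun x _ ↦ convex_positiveContractions.inter
        (WeakDual.convex_setOf_le_re_apply x _))
      (fun x _ ↦ isCompact_positiveContractions.inter_right
        (isClosed_le continuous_const (Complex.continuous_re.comp (WeakDual.eval_continuous x))))
      (fun x _ h ↦ (lt_add_of_pos_right (φ x).re hη).not_ge h.2)
  have : LocallyConvexSpace ℝ (WeakDual ℂ A) :=
    inferInstanceAs (LocallyConvexSpace ℝ (WeakBilin (topDualPairing ℂ A)))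
  have separation := RCLike.geometric_hahn_banach_closed_point (𝕜 := ℂ) (E := WeakDual ℂ A) (s := L)
    (x := StrongDual.toWeakDual φ)
  obtain ⟨f, β, hfL, hfφ⟩ := separation hL hLc.isClosed hφL
  obtain ⟨s, rfl⟩ := LinearMap.dualEmbedding_surjective (topDualPairing ℂ A) f
  refine ⟨realPart s, β, (realPart s).2, ?_, ?_, fun ψ hψ hψ1 hψs x hx ↦ ?_⟩
  · have h0 : (0 : ℂ).re < β := hfL 0 (h0L rfl)
    exact h0
  · have hre := re_apply_realPart (ψ := (φ : A →ₗ[ℂ] ℂ)) hpos s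
    rw [ContinuousLinearMap.coe_coe] at hre
    rw [hre]
    exact hfφ
  · by_contra! hcon
    have := hfL (StrongDual.toWeakDual ψ) (hDL x hx ⟨⟨hψ, hψ1⟩, hcon⟩)
    rw [← ContinuousLinearMap.coe_coe, re_apply_realPart hψ] at hψs
    exact this.not_ge hψs

end Positive

section Cut

variable {A : Type*} [NonUnitalCStarAlgebra A] [PartialOrder A] [StarOrderedRing A]

/-- If a positive contractive functional is larger than `β > 0` at the self-adjoint `s`, it does
not vanish on the part of `s` above `β`. -/
theorem exists_conjugate_ge_smul {s : A} (hs : IsSelfAdjoint s) {φ : A →ₗ[ℂ] ℂ}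
    (hpos : ∀ a : A, 0 ≤ φ (star a * a)) (hφ : ∀ a : A, ‖φ a‖ ≤ ‖a‖) {β : ℝ} (hβ : 0 < β)
    (hsβ : β < (φ s).re) :
    ∃ b : A, IsSelfAdjoint b ∧ φ (b * b) ≠ 0 ∧ β • (b * b) ≤ b * s * b := by
  set k : ℝ → ℝ := fun t ↦ max 0 (t - β)
  have hk0 : k 0 = 0 := by simp [k, hβ.le]
  have hkc : Continuous k := by fun_prop
  have hbb : cfcₙ (fun t ↦ √(k t)) s * cfcₙ (fun t ↦ √(k t)) s = cfcₙ k s := by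
    rw [← cfcₙ_mul (fun t ↦ √(k t)) (fun t ↦ √(k t)) s (by fun_prop) (by simp [hk0])
      (by fun_prop) (by simp [hk0])]
    exact cfcₙ_congr fun t _ ↦ Real.mul_self_sqrt (le_max_left _ _)
  refine ⟨cfcₙ (fun t ↦ √(k t)) s, cfcₙ_predicate _ _, fun h0 ↦ ?_, ?_⟩
  · rw [hbb] at h0
    have hle : s ≤ cfcₙ (fun t : ℝ ↦ min (max t 0) β) s + cfcₙ k s := by
      rw [← cfcₙ_add (fun t : ℝ ↦ min (max t 0) β) k (a := s) (by fun_prop)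
        (by simp [hβ.le]) (by fun_prop) hk0]
      conv_lhs => rw [← cfcₙ_id' ℝ s]
      refine cfcₙ_mono (fun t _ ↦ ?_) (by fun_prop) (by fun_prop) rfl (by simp [hk0, hβ.le])
      simp only [k]
      grind
    have h1 := (Complex.nonneg_iff.1 (apply_nonneg_of_nonneg hpos (sub_nonneg.2 hle))).1
    have h2 : ‖cfcₙ (fun t : ℝ ↦ min (max t 0) β) s‖ ≤ β := by
      refine norm_cfcₙ_le fun t _ ↦ ?_
      rw [Real.norm_of_nonneg (by positivity)]
      exact min_le_right _ _
    have h3 := (Complex.re_le_norm _).trans ((hφ _).trans h2)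
    rw [map_sub, map_add, h0] at h1
    simp at h1
    linarith
  · have hbsb : cfcₙ (fun t ↦ √(k t)) s * s * cfcₙ (fun t ↦ √(k t)) s =
        cfcₙ (fun t ↦ √(k t) * t * √(k t)) s := by
      rw [cfcₙ_mul _ (fun t ↦ √(k t)) s (by fun_prop) (by simp) (by fun_prop) (by simp [hk0]),
        cfcₙ_mul (fun t ↦ √(k t)) (fun t ↦ t) s (by fun_prop) (by simp [hk0]) (by fun_prop) rfl,
        cfcₙ_id' ℝ s]
    rw [hbb, hbsb, ← cfcₙ_smul β k s (by fun_prop) hk0]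
    refine cfcₙ_mono (fun t _ ↦ ?_) (by fun_prop) (by fun_prop) (by simp [hk0]) (by simp)
    rw [mul_right_comm, Real.mul_self_sqrt (le_max_left _ _), smul_eq_mul]
    simp only [k]
    rcases le_total t β with h | h
    · simp [h]
    · rw [max_eq_right (by linarith)]
      nlinarith

end Cut

section Unital

variable {B : Type*} [CStarAlgebra B]

theorem exists_star_mul_self_eq_one_of_mul_eq_one {x p : B} (h : x * p = 1) :
    ∃ r : B, star (p * r) * (p * r) = 1 := by
  let := CStarAlgebra.spectralOrder B
  let := CStarAlgebra.spectralOrderedRing B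
  have hunit : IsUnit (star p * p) := by
    have hle : (1 : B) ≤ (‖x‖ ^ 2) • (star p * p) := by
      calc (1 : B) = star p * (star x * x) * p := by
            rw [mul_assoc, mul_assoc, h, mul_one, ← star_mul, h, star_one]
        _ ≤ star p * algebraMap ℝ B (‖x‖ ^ 2) * p :=
            star_left_conjugate_le_conjugate CStarAlgebra.star_mul_le_algebraMap_norm_sq p
        _ = _ := by
            rw [Algebra.algebraMap_eq_smul_one, mul_smul_comm, smul_mul_assoc, mul_one]
    have hu := CStarAlgebra.isUnit_of_le 1 hle
    rw [Algebra.smul_def, Commute.isUnit_mul_iff (Algebra.commutes _ _)] at hu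
    exact hu.2
  have hsp : IsStrictlyPositive (star p * p) := ⟨star_mul_self_nonneg p, hunit⟩
  refine ⟨(star p * p) ^ (-(1 / 2) : ℝ), ?_⟩
  have hsa : star ((star p * p) ^ (-(1 / 2) : ℝ)) = (star p * p) ^ (-(1 / 2) : ℝ) :=
    (IsSelfAdjoint.of_nonneg CFC.rpow_nonneg).star_eq
  rw [star_mul, hsa]
  simpa only [mul_assoc] using CFC.conjugate_rpow_neg_one_half (star p * p) hsp

variable [PartialOrder B] [StarOrderedRing B]

theorem IsSelfAdjoint.norm_le_of_mem_Icc {a : B} (ha : IsSelfAdjoint a) {r : ℝ}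
    (hr : 0 ≤ r) (h : a ∈ Set.Icc (-algebraMap ℝ B r) (algebraMap ℝ B r)) : ‖a‖ ≤ r := by
  have h1 := (le_algebraMap_iff_spectrum_le (a := a) (r := r)).1 h.2
  have h2 := (algebraMap_le_iff_le_spectrum (a := a) (r := -r)).1 (by simpa using h.1)
  rw [← cfc_id ℝ a]
  exact norm_cfc_le hr fun x hx ↦ abs_le.2 ⟨h2 x hx, h1 x hx⟩

/-- A self-adjoint element which is not bounded by `c` is larger than `c` at some state. -/
theorem exists_state_lt_re_apply {y : B} (hy : IsSelfAdjoint y) {c : ℝ}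
    (hyc : ¬ y ≤ algebraMap ℝ B c) :
    ∃ g : B →L[ℂ] ℂ, (∀ b : B, 0 ≤ g (star b * b)) ∧ (∀ b : B, ‖g b‖ ≤ ‖b‖) ∧ g 1 = 1 ∧
      c < (g y).re := by
  obtain ⟨f, hf, hfy⟩ := ProperCone.hyperplane_separation_point (ProperCone.positive ℝ B)
    (x₀ := algebraMap ℝ B c - y) (by simpa using hyc)
  replace hf : ∀ x : B, 0 ≤ x → 0 ≤ f x := fun x hx ↦ hf x (by simpa using hx)
  have hf_abs {x : B} (hx : IsSelfAdjoint x) : |f x| ≤ f 1 * ‖x‖ := by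
    have h1 := hf _ (sub_nonneg.2 hx.le_algebraMap_norm_self)
    have h2 := hf _ (sub_nonneg.2 hx.neg_algebraMap_norm_le_self)
    simp only [Algebra.algebraMap_eq_smul_one, map_sub, map_neg, map_smul, smul_eq_mul] at h1 h2
    exact abs_le.2 ⟨by linarith, by linarith⟩
  have hf1 : 0 < f 1 := by
    refine (hf 1 zero_le_one).lt_of_ne fun h ↦ hfy.ne ?_
    have := hf_abs ((IsSelfAdjoint.algebraMap B (IsSelfAdjoint.all c)).sub hy)
    rw [← h, zero_mul] at this
    exact abs_nonpos_iff.1 this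
  have hbound (x : B) : ‖((f 1)⁻¹ • f) (realPart x : B)‖ ≤ 1 * ‖x‖ := by
    have h1 := hf_abs (realPart x).2
    have h2 := realPart.norm_le x
    change |(f 1)⁻¹ * f (realPart x : B)| ≤ _
    rw [abs_mul, abs_inv, abs_of_pos hf1, one_mul, inv_mul_le_iff₀ hf1]
    exact h1.trans (by gcongr; exact h2)
  let g₀ : StrongDual ℝ B := LinearMap.mkContinuous
    (((f 1)⁻¹ • f : StrongDual ℝ B).toLinearMap ∘ₗ
      (selfAdjoint.submodule ℝ B).subtype ∘ₗ realPart) 1 hbound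
  have hg₀ (x : B) : g₀ x = (f 1)⁻¹ * f (realPart x : B) := rfl
  have hg {x : B} (hx : IsSelfAdjoint x) :
      g₀.extendRCLike (𝕜 := ℂ) x = ((f 1)⁻¹ * f x : ℝ) := by
    rw [StrongDual.extendRCLike_apply, hg₀, hg₀]
    simp [hx.coe_realPart, hx.imaginaryPart]
  refine ⟨g₀.extendRCLike, fun b ↦ ?_, fun b ↦ ?_, ?_, ?_⟩
  · rw [hg (.star_mul_self b)]
    exact_mod_cast mul_nonneg (inv_nonneg.2 hf1.le) (hf _ (star_mul_self_nonneg b))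
  · refine ContinuousLinearMap.le_of_opNorm_le _ ?_ _ |>.trans_eq (one_mul _)
    rw [StrongDual.norm_extendRCLike]
    exact LinearMap.mkContinuous_norm_le _ zero_le_one _
  · rw [hg (.one B), inv_mul_cancel₀ hf1.ne', Complex.ofReal_one]
  · rw [hg hy, Complex.ofReal_re, lt_inv_mul_iff₀ hf1, ← sub_pos]
    rw [Algebra.algebraMap_eq_smul_one, map_sub, map_smul, smul_eq_mul] at hfy
    linarith

end Unital

section Main

variable {A B : Type*} [NonUnitalCStarAlgebra A] [CStarAlgebra B] {j : A →⋆ₙₐ[ℂ] B}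

theorem norm_star_mul_mul_le_of_star_mul_self_eq_one {V : B} (hV : star V * V = 1) (y : B) :
    ‖star V * y * V‖ ≤ ‖y‖ := by
  rcases subsingleton_or_nontrivial B with h | h
  · rw [Subsingleton.elim (star V * y * V) y]
  have hV1 : ‖V‖ = 1 := by
    have := CStarRing.norm_star_mul_self (x := V)
    rw [hV, CStarRing.norm_one] at this
    nlinarith [norm_nonneg V]
  calc _ ≤ ‖star V‖ * ‖y‖ * ‖V‖ := norm_mul₃_le
    _ = ‖y‖ := by rw [norm_star, hV1, one_mul, mul_one]

/-- The compression by an isometry of a self-adjoint element is bounded as soon as all the positive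
contractive functionals that could detect the failure of the bound satisfy it. -/
theorem star_mul_map_mul_le_of_forall [PartialOrder B] [StarOrderedRing B] {V : B}
    (hV : star V * V = 1) {s x : A} {β c : ℝ} (hs : algebraMap ℝ B β ≤ star V * j s * V)
    (hx : IsSelfAdjoint x)
    (h : ∀ ψ : A →L[ℂ] ℂ, (∀ a : A, 0 ≤ ψ (star a * a)) → (∀ a : A, ‖ψ a‖ ≤ ‖a‖) →
      β ≤ (ψ s).re → (ψ x).re ≤ c) :
    star V * j x * V ≤ algebraMap ℝ B c := by
  by_contra hcon
  have hsa : IsSelfAdjoint (star V * j x * V) := (hx.map j).conjugate' V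
  obtain ⟨g, hg, hg1, hg_one, hgx⟩ := exists_state_lt_re_apply hsa hcon
  have hbound (a : A) : ‖g (star V * j a * V)‖ ≤ 1 * ‖a‖ := by
    rw [one_mul]
    exact (hg1 _).trans <| (norm_star_mul_mul_le_of_star_mul_self_eq_one hV _).trans <|
      NonUnitalStarAlgHom.norm_apply_le j a
  let ψ : A →L[ℂ] ℂ := LinearMap.mkContinuous
    { toFun a := g (star V * j a * V)
      map_add' a b := by simp [mul_add, add_mul]
      map_smul' c a := by simp } 1 hbound
  refine hgx.not_ge (h ψ (fun a ↦ ?_) (fun a ↦ (hbound a).trans_eq (one_mul _)) ?_)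
  · have : star V * j (star a * a) * V = star (j a * V) * (j a * V) := by
      simp only [map_mul, map_star, star_mul, mul_assoc]
    change 0 ≤ g (star V * j (star a * a) * V)
    exact this ▸ hg _
  · have := apply_nonneg_of_nonneg (ψ := (g : B →ₗ[ℂ] ℂ)) hg (sub_nonneg.2 hs)
    replace this := (Complex.nonneg_iff.1 this).1
    simp [Algebra.algebraMap_eq_smul_one, hg_one] at this
    exact this

/-- Under (P1), a full square `c * c` gives an isometry in the right ideal generated by `c`. -/
theorem PropP1.exists_isometry (hP1 : PropP1 B) {c : B} (hc : IsFullIn (c * c)) :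
    ∃ z : B, star (c * z) * (c * z) = 1 := by
  obtain ⟨x, y, hxy⟩ := hP1 _ hc
  obtain ⟨r, hr⟩ := exists_star_mul_self_eq_one_of_mul_eq_one (x := x * c) (p := c * y)
    (by rw [← hxy]; simp only [mul_assoc])
  exact ⟨y * r, by simpa only [mul_assoc] using hr⟩

theorem algebraMap_le_star_mul_map_mul [PartialOrder A] [StarOrderedRing A] [PartialOrder B]
    [StarOrderedRing B] {b s : A} {β : ℝ} (hb : IsSelfAdjoint b) (h : β • (b * b) ≤ b * s * b)
    {z : B} (hz : star (j b * z) * (j b * z) = 1) :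
    algebraMap ℝ B β ≤ star (j b * z) * j s * (j b * z) := by
  obtain ⟨d, hd⟩ := CStarAlgebra.nonneg_iff_eq_star_mul_self.1 (sub_nonneg.2 h)
  have hjd : star (j d * z) * (j d * z) =
      star (j b * z) * j s * (j b * z) - β • (star (j b * z) * (j b * z)) := by
    have hjd' : star (j d) * j d = j b * j s * j b - (β : ℂ) • (j b * j b) := by
      rw [← map_star, ← map_mul, ← hd, ← Complex.coe_smul]
      simp only [map_sub, map_mul, map_smul]
    have hjb : star (j b) = j b := (hb.map j).star_eq
    calc _ = star z * (star (j d) * j d) * z := by simp only [star_mul, mul_assoc]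
      _ = _ := by
        rw [hjd', ← Complex.coe_smul]
        simp only [star_mul, hjb, mul_assoc, mul_sub, sub_mul, mul_smul_comm, smul_mul_assoc]
  rw [← sub_nonneg, Algebra.algebraMap_eq_smul_one, ← hz, ← hjd]
  exact star_mul_self_nonneg _

theorem norm_sub_le_of_realPart_of_imaginaryPart {T : A →ₗ[ℂ] B} {a : A} {η : ℝ}
    (hre : ‖T (realPart a)‖ ≤ η) (him : ‖T (imaginaryPart a)‖ ≤ η) : ‖T a‖ ≤ 2 * η := by
  rw [← realPart_add_I_smul_imaginaryPart a, map_add, map_smul]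
  refine (norm_add_le _ _).trans ?_
  rw [norm_smul, Complex.norm_I]
  linarith

end Main

/-- excision of pure states vanishing on an ideal, through a full embedding
into a C*-algebra with property (P1). -/
theorem stmt19 {A : Type*} [NonUnitalCStarAlgebra A] [TopologicalSpace.SeparableSpace A]
    {B : Type*} [CStarAlgebra B] (hP1 : PropP1 B)
    (I : TwoSidedIdeal A) (hI : IsClosed (I : Set A))
    (j : A →⋆ₙₐ[ℂ] B) (hinj : Function.Injective j)
    (hjfull : ∀ a : A, a ∉ I → IsFullIn (j a))
    (φ : A →L[ℂ] ℂ)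
    (hpos : ∀ a : A, 0 ≤ φ (star a * a))
    (hnorm : ‖φ‖ = 1)
    -- purity: every positive functional dominated by φ is a scalar multiple of φ
    (hpure : ∀ ψ : A →L[ℂ] ℂ, (∀ a : A, 0 ≤ ψ (star a * a)) →
      (∀ a : A, 0 ≤ φ (star a * a) - ψ (star a * a)) → ∃ t : ℝ, ψ = (t : ℂ) • φ)
    (hvanish : ∀ a ∈ I, φ a = 0)
    (F : Finset A) (ε : ℝ) (hε : 0 < ε) :
    ∃ V : B, star V * V = 1 ∧
      -- V V* lies in the hereditary subalgebra generated by j(A)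
      V * star V ∈ closure {x : B | ∃ a₁ a₂ : A, ∃ y : B, x = j a₁ * y * j a₂} ∧
      ∀ a ∈ F, ‖φ a • (1 : B) - star V * j a * V‖ < ε := by
  classical
  let := CStarAlgebra.spectralOrder A
  let := CStarAlgebra.spectralOrderedRing A
  let := CStarAlgebra.spectralOrder B
  let := CStarAlgebra.spectralOrderedRing B
  let G : Finset A := F.image (fun a ↦ (realPart a : A)) ∪ F.image fun a ↦ (imaginaryPart a : A)
  obtain ⟨s, β, hs, hβ, hsβ, hslice⟩ := exists_slice hpos hnorm hpure (G ∪ G.image (- ·))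
    (show 0 < ε / 4 by positivity)
  obtain ⟨b, hb, hφb, hbs⟩ := exists_conjugate_ge_smul hs (φ := (φ : A →ₗ[ℂ] ℂ)) hpos
    (fun a ↦ by simpa [hnorm] using φ.le_opNorm a) hβ hsβ
  obtain ⟨z, hV⟩ := hP1.exists_isometry (c := j b)
    (by rw [← map_mul]; exact hjfull _ fun h ↦ hφb (hvanish _ h))
  have hVs := algebraMap_le_star_mul_map_mul hb hbs hV
  refine ⟨j b * z, hV, subset_closure ⟨b, b, z * star z, ?_⟩, fun a ha ↦ ?_⟩
  · rw [star_mul, (hb.map j).star_eq]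
    simp only [mul_assoc]
  set V := j b * z
  have hle : ∀ x ∈ G ∪ G.image (- ·), IsSelfAdjoint x →
      star V * j x * V ≤ algebraMap ℝ B ((φ x).re + ε / 4) := fun x hx hxs ↦
    star_mul_map_mul_le_of_forall hV hVs hxs fun ψ h1 h2 h3 ↦ (hslice ψ h1 h2 h3 x hx).le
  let T : A →ₗ[ℂ] B :=
    { toFun a := φ a • (1 : B) - star V * j a * V
      map_add' a b := by simp only [map_add, add_smul, mul_add, add_mul]; abel
      map_smul' c a := by simp [smul_sub, mul_smul] }
  have hT : ∀ x ∈ G, IsSelfAdjoint x → ‖T x‖ ≤ ε / 4 := fun x hx hxs ↦ by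
    have hφx : φ x = ((φ x).re : ℂ) :=
      Complex.ext rfl (im_apply_eq_zero (ψ := (φ : A →ₗ[ℂ] ℂ)) hpos hxs)
    have hTx : T x = algebraMap ℝ B (φ x).re - star V * j x * V := by
      change φ x • (1 : B) - _ = _
      rw [hφx, Complex.coe_smul, Algebra.algebraMap_eq_smul_one, Complex.ofReal_re]
    have h1 := hle x (Finset.mem_union_left _ hx) hxs
    have h2 := hle (-x) (Finset.mem_union_right _ (Finset.mem_image_of_mem _ hx)) hxs.neg
    rw [hTx]
    refine ((IsSelfAdjoint.algebraMap B (.all _)).sub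
      ((hxs.map j).conjugate' V)).norm_le_of_mem_Icc (by positivity) ⟨?_, ?_⟩
    · rw [map_add] at h1
      rw [neg_le_sub_iff_le_add']
      rwa [add_comm]
    · rw [map_neg, map_neg, mul_neg, neg_mul, Complex.neg_re, map_add, map_neg, neg_le] at h2
      rw [sub_le_comm]
      convert h2 using 1
      abel
  calc ‖T a‖ ≤ 2 * (ε / 4) := norm_sub_le_of_realPart_of_imaginaryPart
        (hT _ (Finset.mem_union_left _ (Finset.mem_image_of_mem _ ha)) (realPart a).2)
        (hT _ (Finset.mem_union_right _ (Finset.mem_image_of_mem _ ha)) (imaginaryPart a).2)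
    _ < ε := by linarith
end
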